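/- arXiv:2503.08991 — 6 statements merged into one kernel-verified Lean document; each statement's English description precedes it below -/
import Mathlib

section
/- If f : X → X is a continuum-wise expansive homeomorphism of a compact metric space (X,d), then there exists a hyperbolic cw-metric for f, i.e., a function D assigning a real number D(C_{(p,q)}) to each subcontinuum C ⊆ X and each pair of points p,q ∈ C, such that: (1a) D(C_{(p,q)}) ≥ 0, with equality if and only if C is a singleton; (1b) D(C_{(p,q)}) = D(C_{(q,p)}); (1c) D((A∪B)_{(a,c)}) ≤ D(A_{(a,b)}) + D(B_{(b,c)}) whenever A,B are subcontinua with A∪B a subcontinuum, a ∈ A, b ∈ A∩B, c ∈ B; (2) there exist λ ∈ (0,1) and ε > 0 such that if diam(f^k(C)) ≤ ε for all k ≥ 0 then D(f^n(C)_{(f^n(p),f^n(q))}) ≤ 4λ^n D(C_{(p,q)}) for all n ≥ 0, and if diam(f^{-k}(C)) ≤ ε for all k ≥ 0 then D(f^{-n}(C)_{(f^{-n}(p),f^{-n}(q))}) ≤ 4λ^n D(C_{(p,q)}) for all n ≥ 0; (3) for each δ > 0 there is γ > 0 such that diam(C) < γ implies D(C_{(p,q)}) < δ for all p,q ∈ C,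 and if D(C_{(p,q)}) < γ for some p,q ∈ C then diam(C) < δ. -/
open Metric Set

/-- A subcontinuum of `X`: a nonempty compact connected subset. -/
def IsSubcontinuum {X : Type*} [TopologicalSpace X] (C : Set X) : Prop :=
  IsCompact C ∧ IsConnected C

/-- The `c`-stable set of `x`. -/
def Ws {X : Type*} [MetricSpace X] (f : X ≃ₜ X) (c : ℝ) (x : X) : Set X :=
  {y | ∀ n : ℕ, dist (f^[n] x) (f^[n] y) ≤ c}

/-- The `c`-unstable set of `x`. -/
def Wu {X : Type*} [MetricSpace X] (f : X ≃ₜ X) (c : ℝ) (x : X) : Set X :=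
  {y | ∀ n : ℕ, dist (f.symm^[n] x) (f.symm^[n] y) ≤ c}

/-- `f` is continuum-wise expansive with cw-expansive constant `c`. -/
def IsCwExpansiveWith {X : Type*} [MetricSpace X] (f : X ≃ₜ X) (c : ℝ) : Prop :=
  0 < c ∧ ∀ x : X, IsTotallyDisconnected (Wu f c x ∩ Ws f c x)

/-!
Call a set `n`-small if its images under `f ^ k`, `|k| < n`, all have diameter at most the
expansivity constant `c`. In the compact hyperspace of subcontinua, cw-expansivity says that the
closed sets of `n`-small subcontinua decrease to the set of singletons, so for some `m` every
`(n + m)`-small subcontinuum has its images under `f ^ k`, `|k| < n`, of diameter at most `c / 3`.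
Hence, for the relations of lying in a common `n`-small subcontinuum, a threefold composition loses
only `m` steps, and Frink's metrization lemma turns them into a pseudometric `ρ` with `n`-smallness
comparable to `ρ ≤ λ ^ n`, where `λ` is an `m`-th root of `1 / 2`.

The function `D` is the `ρ`-diameter of `C`, whatever the base points `p` and `q`. It sees the
`n`-smallness of `C` itself because smallness is a condition on pairs of points: if all pairs in `C`
lie in `n`-small subcontinua, then `C` is `n`-small. Hyperbolicity holds because a subcontinuum with
small forward images gains one step of smallness with each application of `f`.
-/

open TopologicalSpace
open scoped NNReal SetRel

/-! ### Frink's metrization of a sequence of relations -/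

section Frink

universe u

variable {α : Type u} {R : ℕ → SetRel α α} {lam : ℝ≥0}

/-- The distances `dist (φ x) (φ y)` measure the relations `R n` at the geometric scales `lam ^ n`,
up to a factor `2`. Frink's pseudometric on `α` is encoded as a map to another space because `α` may
carry a metric of its own. -/
structure IsFrinkMap {Y : Type*} [PseudoMetricSpace Y] (R : ℕ → SetRel α α) (lam : ℝ) (φ : α → Y) :
    Prop where
  dist_le_pow : ∀ {n x y}, (x, y) ∈ R n → dist (φ x) (φ y) ≤ lam ^ n
  mem_of_dist_lt : ∀ {n x y}, 2 * dist (φ x) (φ y) < lam ^ n → (x, y) ∈ R n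

open Classical in
/-- The largest `lam ^ n` with `(x, y) ∉ R n`, or `0` if there is no such `n`. It satisfies the
triangle inequality only up to a factor; Frink's lemma replaces it by a pseudometric. -/
noncomputable def relGauge (R : ℕ → SetRel α α) (lam : ℝ≥0) (x y : α) : ℝ≥0 :=
  if h : ∃ n, (x, y) ∉ R n then lam ^ Nat.find h else 0

theorem pow_le_relGauge_iff (hR : Antitone R) (h0 : 0 < lam) (h1 : lam < 1) {n : ℕ} {x y : α} :
    lam ^ n ≤ relGauge R lam x y ↔ (x, y) ∉ R n := by
  classical
  unfold relGauge
  split_ifs with h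
  · rw [pow_le_pow_iff_right_of_lt_one₀ h0 h1, Nat.find_le_iff]
    exact ⟨fun ⟨k, hkn, hk⟩ hn ↦ hk (hR hkn hn), fun hn ↦ ⟨n, le_rfl, hn⟩⟩
  · push Not at h
    simp only [h n, not_true_eq_false, iff_false, not_le, pow_pos h0 n]

theorem relGauge_lt_pow_iff (hR : Antitone R) (h0 : 0 < lam) (h1 : lam < 1) {n : ℕ} {x y : α} :
    relGauge R lam x y < lam ^ n ↔ (x, y) ∈ R n := by
  rw [← not_le, pow_le_relGauge_iff hR h0 h1, not_not]

theorem relGauge_self [∀ n, (R n).IsRefl] (x : α) : relGauge R lam x x = 0 :=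
  dif_neg fun ⟨n, hn⟩ ↦ hn ((R n).refl x)

theorem relGauge_comm [∀ n, (R n).IsSymm] (x y : α) : relGauge R lam x y = relGauge R lam y x := by
  classical
  have hcomm (n : ℕ) : (x, y) ∉ R n ↔ (y, x) ∉ R n := not_congr (R n).comm
  exact dite_congr (propext (exists_congr hcomm))
    (fun _ ↦ congrArg (lam ^ ·) (Nat.find_congr' (hcomm _))) fun _ ↦ rfl

theorem relGauge_le_two_mul_max (hR : Antitone R) (h0 : 0 < lam) (h1 : lam < 1) {m : ℕ}
    (hlam : lam ^ m = 1 / 2) (hcomp : ∀ n, R (n + m) ○ (R (n + m) ○ R (n + m)) ⊆ R n)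
    (x₁ x₂ x₃ x₄ : α) :
    relGauge R lam x₁ x₄ ≤
      2 * max (relGauge R lam x₁ x₂) (max (relGauge R lam x₂ x₃) (relGauge R lam x₃ x₄)) := by
  classical
  by_cases h : ∃ n, (x₁, x₄) ∉ R n
  · have hgauge : relGauge R lam x₁ x₄ = lam ^ Nat.find h := dif_pos h
    rw [hgauge, ← div_le_iff₀' zero_lt_two, ← mul_one_div, ← hlam, ← pow_add]
    simp only [le_max_iff, pow_le_relGauge_iff hR h0 h1, ← not_and_or]
    rintro ⟨h₁₂, h₂₃, h₃₄⟩
    exact Nat.find_spec h (hcomp _ ⟨x₂, h₁₂, x₃, h₂₃, h₃₄⟩)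
  · exact (dif_neg h).trans_le zero_le

theorem exists_isFrinkMap_of_pow_eq_half [∀ n, (R n).IsRefl] [∀ n, (R n).IsSymm]
    (hR : Antitone R) (h0 : 0 < lam) (h1 : lam < 1) {m : ℕ} (hlam : lam ^ m = 1 / 2)
    (hcomp : ∀ n, R (n + m) ○ (R (n + m) ○ R (n + m)) ⊆ R n) :
    ∃ (Y : Type u) (_ : PseudoMetricSpace Y) (φ : α → Y), IsFrinkMap R lam φ := by
  let : PseudoMetricSpace α := .ofPreNNDist (relGauge R lam) relGauge_self relGauge_comm
  refine ⟨α, inferInstance, id, @fun n x y hxy ↦ ?_, @fun n x y hxy ↦ ?_⟩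
  · refine (PseudoMetricSpace.dist_ofPreNNDist_le _ relGauge_self relGauge_comm x y).trans ?_
    exact_mod_cast ((relGauge_lt_pow_iff hR h0 h1).2 hxy).le
  · rw [← relGauge_lt_pow_iff hR h0 h1]
    exact_mod_cast (PseudoMetricSpace.le_two_mul_dist_ofPreNNDist _ relGauge_self relGauge_comm
      (relGauge_le_two_mul_max hR h0 h1 hlam hcomp) x y).trans_lt hxy

theorem exists_isFrinkMap [∀ n, (R n).IsRefl] [∀ n, (R n).IsSymm] (hR : Antitone R) {m : ℕ}
    (hcomp : ∀ n, R (n + m) ○ (R (n + m) ○ R (n + m)) ⊆ R n) :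
    ∃ lam ∈ Ico (1 / 2 : ℝ) 1, ∃ (Y : Type u) (_ : PseudoMetricSpace Y) (φ : α → Y),
      IsFrinkMap R lam φ := by
  set lam : ℝ≥0 := (1 / 2) ^ ((m + 1 : ℕ) : ℝ)⁻¹
  have hlam : lam ^ (m + 1) = 1 / 2 := NNReal.rpow_inv_natCast_pow _ m.succ_ne_zero
  have h1 : lam < 1 := NNReal.rpow_lt_one (NNReal.half_lt_self one_ne_zero) (by positivity)
  have hhalf : 1 / 2 ≤ lam := hlam ▸ pow_le_of_le_one zero_le h1.le m.succ_ne_zero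
  have hcomp' (n : ℕ) : R (n + (m + 1)) ○ (R (n + (m + 1)) ○ R (n + (m + 1))) ⊆ R n := by
    simpa only [add_assoc, add_comm 1 m] using (hcomp (n + 1)).trans (hR n.le_succ)
  exact ⟨lam, ⟨by exact_mod_cast hhalf, by exact_mod_cast h1⟩,
    exists_isFrinkMap_of_pow_eq_half hR (by positivity) h1 hlam hcomp'⟩

end Frink

/-! ### Compact sets in the Vietoris topology -/

section Vietoris

variable {X : Type*} [TopologicalSpace X]

theorem isClosed_setOf_isPreconnected [T2Space X] :
    IsClosed {K : Compacts X | IsPreconnected (K : Set X)} := by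
  refine isOpen_compl_iff.1 (isOpen_iff_forall_mem_open.2 fun K hK ↦ ?_)
  rw [mem_compl_iff, mem_ofPred_eq,
    isPreconnected_iff_subset_of_fully_disjoint_closed K.isCompact.isClosed] at hK
  push Not at hK
  obtain ⟨u, v, hu, hv, huv, hdisj, hKu, hKv⟩ := hK
  obtain ⟨U, V, hU, hV, huU, hvV, hUV⟩ := SeparatedNhds.of_isCompact_isCompact
    (K.isCompact.inter_right hu) (K.isCompact.inter_right hv)
    (hdisj.mono inter_subset_right inter_subset_right)
  refine ⟨{L | (L : Set X) ⊆ U ∪ V} ∩ {L | ((L : Set X) ∩ U).Nonempty} ∩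
    {L | ((L : Set X) ∩ V).Nonempty}, ?_, ?_, ?_⟩
  · rintro L ⟨⟨hL, hLU⟩, hLV⟩ hLconn
    obtain ⟨x, -, hxU, hxV⟩ := hLconn U V hU hV hL hLU hLV
    exact disjoint_left.1 hUV hxU hxV
  · exact ((Compacts.isOpen_subsets_of_isOpen (hU.union hV)).inter
      (Compacts.isOpen_inter_nonempty_of_isOpen hU)).inter
      (Compacts.isOpen_inter_nonempty_of_isOpen hV)
  · obtain ⟨x, hxK, hxu⟩ := not_subset.1 hKu
    obtain ⟨y, hyK, hyv⟩ := not_subset.1 hKv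
    refine ⟨⟨fun z hz ↦ ?_, ⟨y, hyK, huU ⟨hyK, (huv hyK).resolve_right hyv⟩⟩⟩,
      ⟨x, hxK, hvV ⟨hxK, (huv hxK).resolve_left hxu⟩⟩⟩
    exact (huv hz).imp (fun h ↦ huU ⟨hz, h⟩) (fun h ↦ hvV ⟨hz, h⟩)

theorem isClosed_setOf_prod_self_subset {F : Set (X × X)} (hF : IsClosed F) :
    IsClosed {K : Compacts X | (K : Set X) ×ˢ (K : Set X) ⊆ F} :=
  (Compacts.isClosed_subsets_of_isClosed hF).preimage
    (Compacts.continuous_prod.comp (continuous_id.prodMk continuous_id))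

theorem isClosed_setOf_prod_self_inter_nonempty {F : Set (X × X)} (hF : IsClosed F) :
    IsClosed {K : Compacts X | ((K : Set X) ×ˢ (K : Set X) ∩ F).Nonempty} :=
  (Compacts.isClosed_inter_nonempty_of_isClosed hF).preimage
    (Compacts.continuous_prod.comp (continuous_id.prodMk continuous_id))

end Vietoris

/-! ### Subcontinua with small orbits -/

section Subcontinuum

variable {X : Type*} [TopologicalSpace X] {A B : Set X} {x : X}

theorem isSubcontinuum_singleton (x : X) : IsSubcontinuum {x} :=
  ⟨isCompact_singleton, isConnected_singleton⟩

theorem IsSubcontinuum.union (hA : IsSubcontinuum A) (hB : IsSubcontinuum B) (hxA : x ∈ A)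
    (hxB : x ∈ B) : IsSubcontinuum (A ∪ B) :=
  ⟨hA.1.union hB.1, hA.2.union ⟨x, hxA, hxB⟩ hB.2⟩

theorem IsSubcontinuum.image {Y : Type*} [TopologicalSpace Y] (hA : IsSubcontinuum A) {g : X → Y}
    (hg : Continuous g) : IsSubcontinuum (g '' A) :=
  ⟨hA.1.image hg, hA.2.image g hg.continuousOn⟩

theorem homeomorph_coe_zpow_natCast (f : X ≃ₜ X) (n : ℕ) : ⇑(f ^ (n : ℤ)) = f^[n] := by
  rw [zpow_natCast]
  exact hom_coe_pow _ rfl (fun _ _ ↦ rfl) f n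

theorem homeomorph_symm_zpow (f : X ≃ₜ X) (k : ℤ) : f.symm ^ k = f ^ (-k) :=
  inv_zpow' f k

end Subcontinuum

section OrbitSmall

variable {X : Type*} [MetricSpace X] {f : X ≃ₜ X} {a b c δ : ℝ} {m n : ℕ} {A B C : Set X} {x y : X}

/-- All images of `C` under `f ^ k` with `|k| < n` have diameter at most `c`. It is expressed by
pairs of points, so that it makes sense for unbounded sets too, where `Metric.diam` is `0`. -/
def IsOrbitSmall (f : X ≃ₜ X) (c : ℝ) (n : ℕ) (C : Set X) : Prop :=
  ∀ k : ℤ, k.natAbs < n → ∀ x ∈ C, ∀ y ∈ C, dist ((f ^ k) x) ((f ^ k) y) ≤ c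

theorem isOrbitSmall_zero : IsOrbitSmall f c 0 C :=
  fun _ hk ↦ absurd hk (Nat.not_lt_zero _)

theorem isOrbitSmall_singleton (hc : 0 ≤ c) : IsOrbitSmall f c n {x} := by
  rintro k - _ rfl _ rfl
  rwa [dist_self]

theorem IsOrbitSmall.anti (h : IsOrbitSmall f c n C) (hmn : m ≤ n) : IsOrbitSmall f c m C :=
  fun k hk ↦ h k (hk.trans_le hmn)

theorem IsOrbitSmall.union (hA : IsOrbitSmall f a n A) (hB : IsOrbitSmall f b n B) (hxA : x ∈ A)
    (hxB : x ∈ B) : IsOrbitSmall f (a + b) n (A ∪ B) := by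
  intro k hk
  have ha : 0 ≤ a := dist_nonneg.trans (hA k hk x hxA x hxA)
  have hb : 0 ≤ b := dist_nonneg.trans (hB k hk x hxB x hxB)
  rintro y (hy | hy) z (hz | hz)
  · exact (hA k hk y hy z hz).trans (le_add_of_nonneg_right hb)
  · exact dist_triangle _ _ _ |>.trans (add_le_add (hA k hk y hy x hxA) (hB k hk x hxB z hz))
  · rw [add_comm]
    exact dist_triangle _ _ _ |>.trans (add_le_add (hB k hk y hy x hxB) (hA k hk x hxA z hz))
  · exact (hB k hk y hy z hz).trans (le_add_of_nonneg_left ha)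

theorem IsOrbitSmall.image_zpow {k : ℤ} (h : IsOrbitSmall f c (n + k.natAbs) C) :
    IsOrbitSmall f c n (⇑(f ^ k) '' C) := by
  rintro j hj _ ⟨x, hx, rfl⟩ _ ⟨y, hy, rfl⟩
  simpa only [zpow_add, Homeomorph.mul_apply] using h (j + k) (by lia) x hx y hy

theorem isOrbitSmall_symm : IsOrbitSmall f.symm c n C ↔ IsOrbitSmall f c n C := by
  simp only [IsOrbitSmall, homeomorph_symm_zpow]
  exact ⟨fun h k hk ↦ by simpa only [neg_neg] using h (-k) (by rwa [Int.natAbs_neg]),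
    fun h k hk ↦ h (-k) (by rwa [Int.natAbs_neg])⟩

theorem isClosed_setOf_isOrbitSmall :
    IsClosed {K : Compacts X | IsOrbitSmall f c n (K : Set X)} := by
  have hpairs : {K : Compacts X | IsOrbitSmall f c n (K : Set X)} =
      ⋂ (k : ℤ) (_ : k.natAbs < n), {K : Compacts X |
        (K : Set X) ×ˢ (K : Set X) ⊆ {z : X × X | dist ((f ^ k) z.1) ((f ^ k) z.2) ≤ c}} := by
    ext K
    simp only [IsOrbitSmall, mem_ofPred_eq, mem_iInter, subset_def, mem_prod, Prod.forall]
    grind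
  rw [hpairs]
  exact isClosed_iInter fun k ↦ isClosed_iInter fun _ ↦ isClosed_setOf_prod_self_subset
    (isClosed_le (by fun_prop) continuous_const)

theorem IsCwExpansiveWith.subsingleton_of_isOrbitSmall (hc : IsCwExpansiveWith f c)
    (hC : IsPreconnected C) (h : ∀ n, IsOrbitSmall f c n C) : C.Subsingleton := by
  intro x hx y hy
  refine hc.2 x C (fun z hz ↦ ⟨fun n ↦ ?_, fun n ↦ ?_⟩) hC hx hy
  · rw [← homeomorph_coe_zpow_natCast]
    exact isOrbitSmall_symm.2 (h (n + 1)) n (by simp) x hx z hz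
  · rw [← homeomorph_coe_zpow_natCast]
    exact h (n + 1) n (by simp) x hx z hz

variable [CompactSpace X]

theorem IsCwExpansiveWith.exists_dist_lt_of_isOrbitSmall (hc : IsCwExpansiveWith f c) (hδ : 0 < δ) :
    ∃ m, ∀ C, IsSubcontinuum C → IsOrbitSmall f c m C → ∀ x ∈ C, ∀ y ∈ C, dist x y < δ := by
  by_contra! hlarge
  let F (m : ℕ) : Set (Compacts X) :=
    {K | IsPreconnected (K : Set X)} ∩ {K | IsOrbitSmall f c m (K : Set X)} ∩
      {K | ((K : Set X) ×ˢ (K : Set X) ∩ {z | δ ≤ dist z.1 z.2}).Nonempty}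
  have hFclosed (m : ℕ) : IsClosed (F m) :=
    (isClosed_setOf_isPreconnected.inter isClosed_setOf_isOrbitSmall).inter
      (isClosed_setOf_prod_self_inter_nonempty (isClosed_le continuous_const continuous_dist))
  have hFnonempty (m : ℕ) : (F m).Nonempty := by
    obtain ⟨C, hC, hsmall, x, hx, y, hy, hxy⟩ := hlarge m
    exact ⟨⟨C, hC.1⟩, ⟨hC.2.isPreconnected, hsmall⟩, (x, y), ⟨hx, hy⟩, hxy⟩
  have hFanti (m : ℕ) : F (m + 1) ⊆ F m :=
    fun K hK ↦ ⟨⟨hK.1.1, hK.1.2.anti m.le_succ⟩, hK.2⟩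
  obtain ⟨K, hK⟩ := IsCompact.nonempty_iInter_of_sequence_nonempty_isCompact_isClosed F hFanti
    hFnonempty (hFclosed 0).isCompact hFclosed
  rw [mem_iInter] at hK
  have hsub : (K : Set X).Subsingleton :=
    hc.subsingleton_of_isOrbitSmall (hK 0).1.1 fun n ↦ (hK n).1.2
  obtain ⟨⟨x, y⟩, ⟨hx, hy⟩, hxy⟩ := (hK 0).2
  rw [mem_ofPred_eq, hsub hx hy, dist_self] at hxy
  exact hxy.not_gt hδ

theorem IsCwExpansiveWith.exists_isOrbitSmall_of_isOrbitSmall_add (hc : IsCwExpansiveWith f c)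
    (hδ : 0 < δ) :
    ∃ m, ∀ n C, IsSubcontinuum C → IsOrbitSmall f c (n + m) C → IsOrbitSmall f δ n C := by
  obtain ⟨m, hm⟩ := hc.exists_dist_lt_of_isOrbitSmall hδ
  refine ⟨m, fun n C hC h k hk x hx y hy ↦ ?_⟩
  have himage : IsOrbitSmall f c m (⇑(f ^ k) '' C) := (h.anti (by lia)).image_zpow
  exact (hm _ (hC.image (f ^ k).continuous) himage _ (mem_image_of_mem _ hx) _
    (mem_image_of_mem _ hy)).le

theorem IsCwExpansiveWith.exists_diam_lt_of_isOrbitSmall (hc : IsCwExpansiveWith f c) (hδ : 0 < δ) :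
    ∃ m, ∀ C, IsSubcontinuum C → IsOrbitSmall f c m C → diam C < δ := by
  obtain ⟨m, hm⟩ := hc.exists_dist_lt_of_isOrbitSmall (half_pos hδ)
  refine ⟨m, fun C hC h ↦ lt_of_le_of_lt ?_ (half_lt_self hδ)⟩
  exact diam_le_of_forall_dist_le (half_pos hδ).le fun x hx y hy ↦ (hm C hC h x hx y hy).le

theorem exists_isOrbitSmall_of_diam_lt (f : X ≃ₜ X) (hc : 0 < c) (n : ℕ) :
    ∃ γ > 0, ∀ C, diam C < γ → IsOrbitSmall f c n C := by
  have hunif (k : ℤ) : ∃ γ > 0, ∀ x y, dist x y < γ → dist ((f ^ k) x) ((f ^ k) y) < c := by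
    simpa using uniformContinuous_iff.1
      (CompactSpace.uniformContinuous_of_continuous (f ^ k).continuous) c hc
  choose γ hγpos hγ using hunif
  have hne : (Finset.Icc (-n : ℤ) n).Nonempty := ⟨0, by simp⟩
  refine ⟨(Finset.Icc (-n : ℤ) n).inf' hne γ, (Finset.lt_inf'_iff hne).2 fun k _ ↦ hγpos k,
    fun C hC k hk x hx y hy ↦ (hγ k x y ?_).le⟩
  calc dist x y ≤ diam C := dist_le_diam_of_mem isBounded_of_compactSpace hx hy
    _ < (Finset.Icc (-n : ℤ) n).inf' hne γ := hC
    _ ≤ γ k := Finset.inf'_le γ (Finset.mem_Icc.2 (by lia))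

theorem IsOrbitSmall.image_iterate (h : IsOrbitSmall f c m C)
    (hforward : ∀ k : ℕ, diam (f^[k] '' C) ≤ c) (n : ℕ) :
    IsOrbitSmall f c (m + n) (f^[n] '' C) := by
  rintro k hk _ ⟨x, hx, rfl⟩ _ ⟨y, hy, rfl⟩
  have hadd (z : X) : (f ^ k) (f^[n] z) = (f ^ (k + n)) z := by
    rw [zpow_add, ← homeomorph_coe_zpow_natCast, Homeomorph.mul_apply]
  rw [hadd, hadd]
  rcases le_or_gt 0 (k + n) with hnonneg | hneg
  · lift k + n to ℕ using hnonneg with i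
    rw [homeomorph_coe_zpow_natCast]
    exact (dist_le_diam_of_mem isBounded_of_compactSpace (mem_image_of_mem _ hx)
      (mem_image_of_mem _ hy)).trans (hforward i)
  · exact h (k + n) (by lia) x hx y hy

end OrbitSmall

/-! ### Points linked by small subcontinua -/

section Link

universe u

variable {X : Type u} [MetricSpace X] {f : X ≃ₜ X} {c : ℝ} {n : ℕ} {C : Set X}

/-- The pairs of points lying in a common subcontinuum whose images under `f ^ k`, `|k| < n`, have
diameter at most `c`. -/
def orbitLink (f : X ≃ₜ X) (c : ℝ) (n : ℕ) : SetRel X X :=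
  {z | ∃ C, IsSubcontinuum C ∧ IsOrbitSmall f c n C ∧ z.1 ∈ C ∧ z.2 ∈ C}

theorem antitone_orbitLink (f : X ≃ₜ X) (c : ℝ) : Antitone (orbitLink f c) :=
  fun _ _ hmn _ ⟨C, hC, h, hx, hy⟩ ↦ ⟨C, hC, h.anti hmn, hx, hy⟩

theorem orbitLink_isRefl (hc : 0 ≤ c) (n : ℕ) : (orbitLink f c n).IsRefl where
  refl x := ⟨{x}, isSubcontinuum_singleton x, isOrbitSmall_singleton hc, rfl, rfl⟩

theorem orbitLink_isSymm (f : X ≃ₜ X) (c : ℝ) (n : ℕ) : (orbitLink f c n).IsSymm where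
  symm _ _ := fun ⟨C, hC, h, hx, hy⟩ ↦ ⟨C, hC, h, hy, hx⟩

theorem isOrbitSmall_of_forall_mem_orbitLink (h : ∀ x ∈ C, ∀ y ∈ C, (x, y) ∈ orbitLink f c n) :
    IsOrbitSmall f c n C := by
  intro k hk x hx y hy
  obtain ⟨E, -, hE, hxE, hyE⟩ := h x hx y hy
  exact hE k hk x hxE y hyE

theorem IsCwExpansiveWith.exists_orbitLink_comp_subset [CompactSpace X]
    (hc : IsCwExpansiveWith f c) :
    ∃ m, ∀ n, orbitLink f c (n + m) ○ (orbitLink f c (n + m) ○ orbitLink f c (n + m)) ⊆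
      orbitLink f c n := by
  obtain ⟨m, hm⟩ := hc.exists_isOrbitSmall_of_isOrbitSmall_add (div_pos hc.1 three_pos)
  refine ⟨m, fun n ⟨x, y⟩ ⟨u, ⟨A, hA, hAsmall, hxA, huA⟩, v, ⟨B, hB, hBsmall, huB, hvB⟩,
    E, hE, hEsmall, hvE, hyE⟩ ↦ ?_⟩
  have hsmall : IsOrbitSmall f (c / 3 + (c / 3 + c / 3)) n (A ∪ (B ∪ E)) :=
    (hm n A hA hAsmall).union ((hm n B hB hBsmall).union (hm n E hE hEsmall) hvB hvE) huA
      (Or.inl huB)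
  refine ⟨A ∪ (B ∪ E), hA.union (hB.union hE hvB hvE) huA (Or.inl huB), ?_, Or.inl hxA,
    Or.inr (Or.inr hyE)⟩
  rwa [← add_assoc, add_thirds] at hsmall

theorem IsCwExpansiveWith.exists_isFrinkMap_orbitLink [CompactSpace X]
    (hc : IsCwExpansiveWith f c) :
    ∃ lam ∈ Ico (1 / 2 : ℝ) 1, ∃ (Y : Type u) (_ : PseudoMetricSpace Y) (φ : X → Y),
      IsFrinkMap (orbitLink f c) lam φ := by
  have := orbitLink_isRefl (f := f) hc.1.le
  have := orbitLink_isSymm f c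
  obtain ⟨m, hm⟩ := hc.exists_orbitLink_comp_subset
  exact exists_isFrinkMap (antitone_orbitLink f c) hm

end Link

/-! ### The diameter of a subcontinuum for the Frink pseudometric -/

namespace IsFrinkMap

variable {X Y : Type*} [MetricSpace X] [PseudoMetricSpace Y] {f : X ≃ₜ X} {c lam δ : ℝ} {φ : X → Y}
  {n : ℕ} {C : Set X}

theorem diam_image_le_pow (hφ : IsFrinkMap (orbitLink f c) lam φ) (h0 : 0 ≤ lam)
    (hC : IsSubcontinuum C) (h : IsOrbitSmall f c n C) : diam (φ '' C) ≤ lam ^ n := by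
  refine diam_le_of_forall_dist_le (pow_nonneg h0 n) ?_
  rintro _ ⟨x, hx, rfl⟩ _ ⟨y, hy, rfl⟩
  exact hφ.dist_le_pow ⟨C, hC, h, hx, hy⟩

theorem isBounded_image (hφ : IsFrinkMap (orbitLink f c) lam φ) (hC : IsSubcontinuum C) :
    Bornology.IsBounded (φ '' C) := by
  refine isBounded_iff.2 ⟨lam ^ 0, ?_⟩
  rintro _ ⟨x, hx, rfl⟩ _ ⟨y, hy, rfl⟩
  exact hφ.dist_le_pow ⟨C, hC, isOrbitSmall_zero, hx, hy⟩

theorem isOrbitSmall_of_diam_image_lt (hφ : IsFrinkMap (orbitLink f c) lam φ)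
    (hC : IsSubcontinuum C) (h : 2 * diam (φ '' C) < lam ^ n) : IsOrbitSmall f c n C := by
  refine isOrbitSmall_of_forall_mem_orbitLink fun x hx y hy ↦ hφ.mem_of_dist_lt ?_
  linarith [dist_le_diam_of_mem (hφ.isBounded_image hC) (mem_image_of_mem φ hx)
    (mem_image_of_mem φ hy)]

theorem diam_image_eq_zero_iff (hφ : IsFrinkMap (orbitLink f c) lam φ)
    (hc : IsCwExpansiveWith f c) (h0 : 0 < lam) (hC : IsSubcontinuum C) :
    diam (φ '' C) = 0 ↔ ∃ x, C = {x} := by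
  refine ⟨fun h ↦ ?_, ?_⟩
  · have hsmall (n : ℕ) : IsOrbitSmall f c n C :=
      hφ.isOrbitSmall_of_diam_image_lt hC (by rw [h, mul_zero]; positivity)
    exact exists_eq_singleton_iff_nonempty_subsingleton.2
      ⟨hC.2.nonempty, hc.subsingleton_of_isOrbitSmall hC.2.isPreconnected hsmall⟩
  · rintro ⟨x, rfl⟩
    rw [image_singleton, diam_singleton]

/-- If `j` is the last scale at which `C` is small, then `2 * diam (φ '' C) ≥ lam ^ (j + 1)`,
whereas `diam (φ '' (g '' C)) ≤ lam ^ (j + n)`; the constant `4` bounds `2 / lam`. -/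
theorem diam_image_image_le (hφ : IsFrinkMap (orbitLink f c) lam φ) (hc : IsCwExpansiveWith f c)
    (hlam : 1 / 2 ≤ lam) (hC : IsSubcontinuum C) {g : X → X} (hg : Continuous g)
    (hsmall : ∀ j, IsOrbitSmall f c j C → IsOrbitSmall f c (j + n) (g '' C)) :
    diam (φ '' (g '' C)) ≤ 4 * lam ^ n * diam (φ '' C) := by
  have h0 : 0 < lam := one_half_pos.trans_le hlam
  by_cases hall : ∀ j, IsOrbitSmall f c j C → IsOrbitSmall f c (j + 1) C
  · have hsub : C.Subsingleton := hc.subsingleton_of_isOrbitSmall hC.2.isPreconnected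
      fun j ↦ Nat.rec isOrbitSmall_zero hall j
    rw [diam_subsingleton (hsub.image φ), diam_subsingleton ((hsub.image g).image φ), mul_zero]
  · push Not at hall
    obtain ⟨j, hj, hj'⟩ := hall
    have hlower : lam ^ (j + 1) ≤ 2 * diam (φ '' C) :=
      not_lt.1 fun h ↦ hj' (hφ.isOrbitSmall_of_diam_image_lt hC h)
    calc diam (φ '' (g '' C))
        ≤ lam ^ (j + n) := hφ.diam_image_le_pow h0.le (hC.image hg) (hsmall j hj)
      _ ≤ 2 * lam * lam ^ (j + n) := le_mul_of_one_le_left (by positivity) (by linarith)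
      _ = 2 * lam ^ n * lam ^ (j + 1) := by ring
      _ ≤ 2 * lam ^ n * (2 * diam (φ '' C)) := by gcongr
      _ = 4 * lam ^ n * diam (φ '' C) := by ring

variable [CompactSpace X]

theorem diam_image_iterate_le (hφ : IsFrinkMap (orbitLink f c) lam φ)
    (hc : IsCwExpansiveWith f c) (hlam : 1 / 2 ≤ lam) (hC : IsSubcontinuum C)
    (hforward : ∀ k : ℕ, diam (f^[k] '' C) ≤ c) (n : ℕ) :
    diam (φ '' (f^[n] '' C)) ≤ 4 * lam ^ n * diam (φ '' C) :=
  hφ.diam_image_image_le hc hlam hC (f.continuous.iterate n) fun _ h ↦ h.image_iterate hforward n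

theorem diam_image_symm_iterate_le (hφ : IsFrinkMap (orbitLink f c) lam φ)
    (hc : IsCwExpansiveWith f c) (hlam : 1 / 2 ≤ lam) (hC : IsSubcontinuum C)
    (hbackward : ∀ k : ℕ, diam (f.symm^[k] '' C) ≤ c) (n : ℕ) :
    diam (φ '' (f.symm^[n] '' C)) ≤ 4 * lam ^ n * diam (φ '' C) :=
  hφ.diam_image_image_le hc hlam hC (f.symm.continuous.iterate n) fun _ h ↦
    isOrbitSmall_symm.1 ((isOrbitSmall_symm.2 h).image_iterate hbackward n)

theorem exists_diam_image_lt_of_diam_lt (hφ : IsFrinkMap (orbitLink f c) lam φ) (hc : 0 < c)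
    (hlam : lam ∈ Ioo (0 : ℝ) 1) (hδ : 0 < δ) :
    ∃ γ > 0, ∀ C, IsSubcontinuum C → diam C < γ → diam (φ '' C) < δ := by
  obtain ⟨n, hn⟩ := exists_pow_lt_of_lt_one hδ hlam.2
  obtain ⟨γ, hγ, hsmall⟩ := exists_isOrbitSmall_of_diam_lt f hc n
  exact ⟨γ, hγ, fun C hC h ↦ (hφ.diam_image_le_pow hlam.1.le hC (hsmall C h)).trans_lt hn⟩

theorem exists_diam_lt_of_diam_image_lt (hφ : IsFrinkMap (orbitLink f c) lam φ)
    (hc : IsCwExpansiveWith f c) (h0 : 0 < lam) (hδ : 0 < δ) :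
    ∃ γ > 0, ∀ C, IsSubcontinuum C → diam (φ '' C) < γ → diam C < δ := by
  obtain ⟨m, hm⟩ := hc.exists_diam_lt_of_isOrbitSmall hδ
  refine ⟨lam ^ m / 2, by positivity, fun C hC h ↦
    hm C hC (hφ.isOrbitSmall_of_diam_image_lt hC ?_)⟩
  linarith

end IsFrinkMap

/-- every cw-expansive homeomorphism of a compact metric space
admits a hyperbolic cw-metric. -/
theorem exists_hyperbolic_cw_metric
    {X : Type*} [MetricSpace X] [CompactSpace X] (f : X ≃ₜ X)
    (hcw : ∃ c : ℝ, IsCwExpansiveWith f c) :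
    ∃ D : Set X → X → X → ℝ,
      -- (1a) nonnegativity, vanishing exactly on singletons
      (∀ C p q, IsSubcontinuum C → p ∈ C → q ∈ C →
        0 ≤ D C p q ∧ (D C p q = 0 ↔ ∃ x, C = {x})) ∧
      -- (1b) symmetry
      (∀ C p q, IsSubcontinuum C → p ∈ C → q ∈ C → D C p q = D C q p) ∧
      -- (1c) triangle inequality
      (∀ A B a b c, IsSubcontinuum A → IsSubcontinuum B → IsSubcontinuum (A ∪ B) →
        a ∈ A → b ∈ A ∩ B → c ∈ B →
        D (A ∪ B) a c ≤ D A a b + D B b c) ∧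
      -- (2) hyperbolicity
      (∃ lam : ℝ, lam ∈ Set.Ioo (0:ℝ) 1 ∧ ∃ ε : ℝ, 0 < ε ∧
        (∀ C p q, IsSubcontinuum C → p ∈ C → q ∈ C →
          (∀ k : ℕ, diam (f^[k] '' C) ≤ ε) →
          ∀ n : ℕ, D (f^[n] '' C) (f^[n] p) (f^[n] q) ≤ 4 * lam ^ n * D C p q) ∧
        (∀ C p q, IsSubcontinuum C → p ∈ C → q ∈ C →
          (∀ k : ℕ, diam (f.symm^[k] '' C) ≤ ε) →
          ∀ n : ℕ, D (f.symm^[n] '' C) (f.symm^[n] p) (f.symm^[n] q) ≤ 4 * lam ^ n * D C p q)) ∧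
      -- (3) compatibility with the diameter
      (∀ δ : ℝ, 0 < δ → ∃ γ : ℝ, 0 < γ ∧
        (∀ C p q, IsSubcontinuum C → p ∈ C → q ∈ C → diam C < γ → D C p q < δ) ∧
        (∀ C p q, IsSubcontinuum C → p ∈ C → q ∈ C → D C p q < γ → diam C < δ)) := by
  obtain ⟨c, hc⟩ := hcw
  obtain ⟨lam, ⟨hhalf, h1⟩, Y, _, φ, hφ⟩ := hc.exists_isFrinkMap_orbitLink
  have h0 : 0 < lam := one_half_pos.trans_le hhalf
  refine ⟨fun C _ _ ↦ diam (φ '' C), fun C p q hC _ _ ↦ ⟨diam_nonneg, ?_⟩,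
    fun _ _ _ _ _ _ ↦ rfl, fun A B a b e _ _ _ _ hb _ ↦ ?_,
    ⟨lam, ⟨h0, h1⟩, c, hc.1, fun C p q hC _ _ hforward ↦ ?_, fun C p q hC _ _ hbackward ↦ ?_⟩,
    fun δ hδ ↦ ?_⟩
  · exact hφ.diam_image_eq_zero_iff hc h0 hC
  · simpa only [image_union] using
      diam_union' ⟨φ b, mem_image_of_mem φ hb.1, mem_image_of_mem φ hb.2⟩
  · exact hφ.diam_image_iterate_le hc hhalf hC hforward
  · exact hφ.diam_image_symm_iterate_le hc hhalf hC hbackward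
  · obtain ⟨γ₁, hγ₁, hle⟩ := hφ.exists_diam_image_lt_of_diam_lt hc.1 ⟨h0, h1⟩ hδ
    obtain ⟨γ₂, hγ₂, hge⟩ := hφ.exists_diam_lt_of_diam_image_lt hc h0 hδ
    exact ⟨min γ₁ γ₂, lt_min hγ₁ hγ₂,
      fun C p q hC _ _ h ↦ hle C hC (h.trans_le (min_le_left _ _)),
      fun C p q hC _ _ h ↦ hge C hC (h.trans_le (min_le_right _ _))⟩
end

section
/- For every n ≥ 1, the number of n-periodic points of f_A is Per_n(f_A) = λ^n + λ^{−n} − 2. -/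
open Matrix

/-- The 2-torus ℝ²/ℤ². -/
abbrev Torus : Type := AddCircle (1:ℝ) × AddCircle (1:ℝ)

/-- The quotient map ℝ² → 𝕋². -/
noncomputable def torusMk (v : ℝ × ℝ) : Torus := (↑v.1, ↑v.2)

/-- The linear action of an integer matrix `A ∈ SL(2,ℤ)` on ℝ². -/
noncomputable def matAct (A : Matrix.SpecialLinearGroup (Fin 2) ℤ) (v : ℝ × ℝ) : ℝ × ℝ :=
  ((A.1 0 0 : ℤ) * v.1 + (A.1 0 1 : ℤ) * v.2,
   (A.1 1 0 : ℤ) * v.1 + (A.1 1 1 : ℤ) * v.2)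

/-! A fixed point of a linear map `N` of `ℝᵈ/ℤᵈ` is the class of a vector that `N - 1` sends into
`ℤᵈ`. When `N - 1` is invertible, it identifies the group `(N - 1)⁻¹ ℤᵈ / ℤᵈ` of these classes with
`ℤᵈ / (N - 1) ℤᵈ`, which has `|det (N - 1)|` elements. For `N = Aⁿ`, where `A` is a `2 × 2` matrix
with eigenvalues `λ` and `λ⁻¹`, the determinant is `(λⁿ - 1) (λ⁻ⁿ - 1) = 2 - λⁿ - λ⁻ⁿ`. -/

open Function

section AddGroup

variable {V T : Type*} [AddCommGroup V] [AddCommGroup T] {π : V →+ T} {g : V →+ V} {F : T → T}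

theorem fixedPoints_eq_map_comap_ker_of_semiconj (hπ : Surjective π) (hF : Semiconj π g F) :
    fixedPoints F = (π.ker.comap (g - AddMonoidHom.id V)).map π := by
  have apply_eq_iff (v : V) : F (π v) = π v ↔ (g - AddMonoidHom.id V) v ∈ π.ker := by
    rw [← hF v, AddMonoidHom.mem_ker, AddMonoidHom.sub_apply, AddMonoidHom.id_apply, map_sub,
      sub_eq_zero]
  ext x
  constructor
  · intro hx
    obtain ⟨v, rfl⟩ := hπ x
    exact ⟨v, (apply_eq_iff v).1 hx, rfl⟩
  · rintro ⟨v, hv, rfl⟩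
    exact (apply_eq_iff v).2 hv

theorem card_fixedPoints_of_semiconj (hπ : Surjective π)
    (hg : Bijective (g - AddMonoidHom.id V)) (hF : Semiconj π g F) :
    Nat.card (fixedPoints F) = (π.ker.map (g - AddMonoidHom.id V)).relIndex π.ker := by
  set h := g - AddMonoidHom.id V
  calc Nat.card (fixedPoints F)
      = Nat.card ((π.ker.comap h).map π) := by
        rw [fixedPoints_eq_map_comap_ker_of_semiconj hπ hF]; rfl
    _ = π.ker.relIndex (π.ker.comap h) := (AddSubgroup.relIndex_ker ..).symm
    _ = (π.ker.map h).relIndex ((π.ker.comap h).map h) :=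
        (AddSubgroup.relIndex_map_map_of_injective _ _ hg.injective).symm
    _ = (π.ker.map h).relIndex π.ker := by
        rw [AddSubgroup.map_comap_eq_self_of_surjective hg.surjective]

end AddGroup

theorem index_range_eq_natAbs_det {L : Type*} [AddCommGroup L] [Module.Free ℤ L]
    [Module.Finite ℤ L] {f : L →ₗ[ℤ] L} (hf : Injective f) :
    f.toAddMonoidHom.range.index = (LinearMap.det f).natAbs :=
  (Submodule.natAbs_det_equiv (LinearMap.range f) (LinearEquiv.ofInjective f hf)).symm

/-- The lattice `ℤ^ι` of integer vectors in `K^ι`. -/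
def integerVectors (ι K : Type*) [Ring K] : AddSubgroup (ι → K) :=
  ((Int.castAddHom K).compLeft ι).range

section IntegerMatrix

variable {ι : Type*} [Fintype ι] [DecidableEq ι]

theorem iterate_mulVec {R : Type*} [CommSemiring R] (M : Matrix ι ι R) (n : ℕ) :
    M.mulVec^[n] = (M ^ n).mulVec := by
  ext1 v
  rw [← Matrix.toLin'_apply (M ^ n), Matrix.toLin'_pow, Module.End.pow_apply]
  rfl

theorem relIndex_map_mulVec_integerVectors {K : Type*} [CommRing K] [CharZero K]
    {N : Matrix ι ι ℤ} (hN : N.det ≠ 0) :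
    ((integerVectors ι K).map ((Int.castRingHom K).mapMatrix N).toLin'.toAddMonoidHom).relIndex
      (integerVectors ι K) = N.det.natAbs := by
  set c := (Int.castAddHom K).compLeft ι
  have hc : Injective c := Int.cast_injective.comp_left
  have mulVec_cast : ((Int.castRingHom K).mapMatrix N).toLin'.toAddMonoidHom.comp c =
      c.comp N.toLin'.toAddMonoidHom := by
    ext v i
    exact (RingHom.map_mulVec (Int.castRingHom K) N _ i).symm
  calc _ = (N.toLin'.toAddMonoidHom.range.map c).relIndex ((⊤ : AddSubgroup _).map c) := by
        rw [integerVectors, AddMonoidHom.map_range, mulVec_cast, AddMonoidHom.map_range,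
          ← AddMonoidHom.range_eq_map]
    _ = N.toLin'.toAddMonoidHom.range.index := by
        rw [AddSubgroup.relIndex_map_map_of_injective _ _ hc, AddSubgroup.relIndex_top_right]
    _ = N.det.natAbs := by
        rw [index_range_eq_natAbs_det (Matrix.mulVec_injective_of_det_ne_zero hN),
          LinearMap.det_toLin']

variable {K T : Type*} [Field K] [CharZero K] [AddCommGroup T]
  {π : (ι → K) →+ T} {M : Matrix ι ι ℤ} {F : T → T}

theorem card_fixedPoints_of_semiconj_mulVec (hπ : Surjective π)
    (hker : π.ker = integerVectors ι K)
    (hF : Semiconj π ((Int.castRingHom K).mapMatrix M).mulVec F) (hM : (M - 1).det ≠ 0) :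
    Nat.card (fixedPoints F) = (M - 1).det.natAbs := by
  set N := (Int.castRingHom K).mapMatrix (M - 1) with hN
  have sub_id_eq : ((Int.castRingHom K).mapMatrix M).toLin'.toAddMonoidHom - AddMonoidHom.id _ =
      N.toLin'.toAddMonoidHom := by
    rw [hN, map_sub, map_one, map_sub, Matrix.toLin'_one]
    rfl
  have det_ne_zero : N.det ≠ 0 := by
    rw [hN, ← RingHom.map_det]
    exact Int.cast_ne_zero.2 hM
  have mulVec_bijective : Bijective N.toLin'.toAddMonoidHom :=
    ⟨Matrix.mulVec_injective_of_det_ne_zero det_ne_zero, Matrix.mulVec_surjective_iff_isUnit.2 <|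
      N.isUnit_iff_isUnit_det.2 det_ne_zero.isUnit⟩
  rw [card_fixedPoints_of_semiconj hπ (sub_id_eq ▸ mulVec_bijective) hF, sub_id_eq, hker,
    relIndex_map_mulVec_integerVectors hM]

theorem card_ptsOfPeriod_of_semiconj_mulVec (hπ : Surjective π)
    (hker : π.ker = integerVectors ι K)
    (hF : Semiconj π ((Int.castRingHom K).mapMatrix M).mulVec F) {n : ℕ}
    (hM : (M ^ n - 1).det ≠ 0) :
    Nat.card (ptsOfPeriod F n) = (M ^ n - 1).det.natAbs := by
  have hFn : Semiconj π ((Int.castRingHom K).mapMatrix (M ^ n)).mulVec F^[n] := by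
    rw [map_pow, ← iterate_mulVec]
    exact hF.iterate_right n
  exact card_fixedPoints_of_semiconj_mulVec hπ hker hFn hM

end IntegerMatrix

section FinTwo

variable {R S : Type*} [CommRing R] [CommRing S]

theorem det_sub_one_fin_two (M : Matrix (Fin 2) (Fin 2) R) :
    (M - 1).det = M.det - M.trace + 1 := by
  simp only [Matrix.det_fin_two, Matrix.trace_fin_two, Matrix.sub_apply, Matrix.one_apply_eq,
    Matrix.one_apply_ne zero_ne_one, Matrix.one_apply_ne one_ne_zero]
  ring

theorem sq_eq_trace_smul_sub_det_smul_one_fin_two (M : Matrix (Fin 2) (Fin 2) R) :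
    M ^ 2 = M.trace • M - M.det • 1 := by
  nontriviality R
  have cayley_hamilton : M ^ 2 - M.trace • M + M.det • 1 = 0 := by
    simpa [Matrix.charpoly_fin_two, Algebra.algebraMap_eq_smul_one] using M.aeval_self_charpoly
  rw [← sub_eq_zero, ← cayley_hamilton]
  abel

variable {M : Matrix (Fin 2) (Fin 2) R} {f : R →+* S} {a b : S}

theorem map_trace_pow_fin_two (htr : f M.trace = a + b) (hdet : f M.det = a * b) (n : ℕ) :
    f (M ^ n).trace = a ^ n + b ^ n := by
  induction n using Nat.twoStepInduction with
  | zero => simp [← one_add_one_eq_two]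
  | one => simpa using htr
  | more n ih ih_succ =>
    have recurrence : M ^ (n + 2) = M.trace • M ^ (n + 1) - M.det • M ^ n := by
      rw [pow_add, sq_eq_trace_smul_sub_det_smul_one_fin_two, mul_sub, mul_smul_comm,
        mul_smul_comm, mul_one, pow_succ]
    rw [recurrence, Matrix.trace_sub, Matrix.trace_smul, Matrix.trace_smul, smul_eq_mul,
      smul_eq_mul, map_sub, map_mul, map_mul, htr, hdet, ih, ih_succ]
    ring

theorem map_det_pow_sub_one_fin_two (htr : f M.trace = a + b) (hdet : f M.det = a * b) (n : ℕ) :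
    f (M ^ n - 1).det = (a ^ n - 1) * (b ^ n - 1) := by
  rw [det_sub_one_fin_two, Matrix.det_pow, map_add, map_sub, map_pow, map_one, hdet,
    map_trace_pow_fin_two htr hdet]
  ring

end FinTwo

/-- The quotient homomorphism `ℝ² → 𝕋²`, with `ℝ²` as the space `Fin 2 → ℝ` on which matrices
act. -/
noncomputable def torusHom : (Fin 2 → ℝ) →+ Torus where
  toFun v := torusMk (v 0, v 1)
  map_zero' := rfl
  map_add' _ _ := rfl

theorem torusHom_surjective : Surjective torusHom := by
  rintro ⟨⟨x⟩, ⟨y⟩⟩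
  exact ⟨![x, y], rfl⟩

theorem ker_torusHom : torusHom.ker = integerVectors (Fin 2) ℝ := by
  ext v
  calc torusHom v = 0
      ↔ (∃ k : ℤ, (k : ℝ) = v 0) ∧ ∃ l : ℤ, (l : ℝ) = v 1 := by
        simp [torusHom, torusMk, AddSubgroup.mem_zmultiples_iff]
    _ ↔ ∃ w : Fin 2 → ℤ, (Int.castAddHom ℝ).compLeft (Fin 2) w = v := by
        simp [Fin.exists_fin_succ_pi, funext_iff]

theorem semiconj_torusHom {A : Matrix.SpecialLinearGroup (Fin 2) ℤ} {F : Torus → Torus}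
    (hF : ∀ v : ℝ × ℝ, F (torusMk v) = torusMk (matAct A v)) :
    Semiconj torusHom ((Int.castRingHom ℝ).mapMatrix A.1).mulVec F := by
  intro v
  set w := (Int.castRingHom ℝ).mapMatrix A.1 *ᵥ v with hw
  have matAct_eq : matAct A (v 0, v 1) = (w 0, w 1) := by
    simp [hw, matAct]
  exact ((hF (v 0, v 1)).trans (congrArg torusMk matAct_eq)).symm

/-- `Per_n(f_A) = λ^n + λ^{-n} - 2`. -/
theorem card_periodic_points_torus
    (A : Matrix.SpecialLinearGroup (Fin 2) ℤ)
    (lam : ℝ) (hlam : 1 < lam)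
    -- the eigenvalues of A are lam and lam⁻¹, i.e. tr A = lam + lam⁻¹ (det A = 1)
    (htr : ((A.1 0 0 : ℤ) : ℝ) + ((A.1 1 1 : ℤ) : ℝ) = lam + lam⁻¹)
    (fA : Torus ≃ₜ Torus)
    (hfA : ∀ v : ℝ × ℝ, fA (torusMk v) = torusMk (matAct A v)) :
    ∀ n : ℕ, 1 ≤ n →
      (Nat.card {x : Torus | fA^[n] x = x} : ℝ) = lam ^ n + lam⁻¹ ^ n - 2 := by
  intro n hn
  have det_eq : ((A.1 ^ n - 1).det : ℝ) = (lam ^ n - 1) * (lam⁻¹ ^ n - 1) := by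
    refine map_det_pow_sub_one_fin_two (f := Int.castRingHom ℝ) ?_ ?_ n
    · simpa [Matrix.trace_fin_two] using htr
    · rw [A.2, map_one, mul_inv_cancel₀ (by positivity)]
  have det_neg : ((A.1 ^ n - 1).det : ℝ) < 0 := by
    rw [det_eq]
    exact mul_neg_of_pos_of_neg (sub_pos.2 (one_lt_pow₀ hlam (by lia)))
      (sub_neg.2 (pow_lt_one₀ (by positivity) (inv_lt_one_of_one_lt₀ hlam) (by lia)))
  calc (Nat.card (ptsOfPeriod fA n) : ℝ)
      = ((A.1 ^ n - 1).det.natAbs : ℝ) := by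
        rw [card_ptsOfPeriod_of_semiconj_mulVec torusHom_surjective ker_torusHom
          (semiconj_torusHom hfA) (by exact_mod_cast det_neg.ne)]
    _ = -((lam ^ n - 1) * (lam⁻¹ ^ n - 1)) := by
        rw [Nat.cast_natAbs, Int.cast_abs, abs_of_neg det_neg, det_eq]
    _ = lam ^ n + lam⁻¹ ^ n - 2 := by
        have mul_pow_inv : lam ^ n * lam⁻¹ ^ n = 1 := by
          rw [← mul_pow, mul_inv_cancel₀ (by positivity), one_pow]
        linear_combination -mul_pow_inv
end

section
/- For every n ≥ 1, the number of antipodal n-periodic points of f_A is Per_n^−(f_A) = λ^n + λ^{−n} + 2. -/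
open Matrix

/-!
A point is antipodal `n`-periodic iff it lies in the kernel of `B = Aⁿ + 1` acting on the torus.
Since `B` is invertible on `ℝ²`, the snake lemma applied to `B` acting on
`0 → ℤ² → ℝ² → 𝕋² → 0` identifies this kernel with `ℤ² / Bℤ²`, which has `|det B|` elements.
Finally `det (Aⁿ + 1) = tr Aⁿ + 2 = λⁿ + λ⁻ⁿ + 2`, because `det Aⁿ = 1`.
-/

open Function
open scoped Matrix.Module

section Snake

variable {R : Type*} [CommRing R] {M₁ M₂ M₃ N₁ N₂ N₃ : Type*}
  [AddCommGroup M₁] [Module R M₁] [AddCommGroup M₂] [Module R M₂] [AddCommGroup M₃] [Module R M₃]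
  [AddCommGroup N₁] [Module R N₁] [AddCommGroup N₂] [Module R N₂] [AddCommGroup N₃] [Module R N₃]

theorem card_ker_eq_card_quotient_range_of_exact
    {i₁ : M₁ →ₗ[R] N₁} {i₂ : M₂ →ₗ[R] N₂} {i₃ : M₃ →ₗ[R] N₃}
    {f₁ : M₁ →ₗ[R] M₂} {f₂ : M₂ →ₗ[R] M₃} {g₁ : N₁ →ₗ[R] N₂} {g₂ : N₂ →ₗ[R] N₃}
    (hf : Exact f₁ f₂) (hg : Exact g₁ g₂) (hf₂ : Surjective f₂) (hg₁ : Injective g₁)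
    (h₁ : g₁ ∘ₗ i₁ = i₂ ∘ₗ f₁) (h₂ : g₂ ∘ₗ i₂ = i₃ ∘ₗ f₂) (hi₂ : Bijective i₂) :
    Nat.card (LinearMap.ker i₃) = Nat.card (N₁ ⧸ LinearMap.range i₁) := by
  have exact_ker : Exact (LinearMap.ker i₃).subtype i₃ := i₃.exact_subtype_ker_map
  have exact_coker : Exact i₁ (LinearMap.range i₁).mkQ := i₁.exact_map_mkQ_range
  let δ := SnakeLemma.δ' i₁ i₂ i₃ f₁ f₂ hf g₁ g₂ hg h₁ h₂ _ exact_ker _ exact_coker hf₂ hg₁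
  have δ_injective : Injective δ := by
    have exact_zero : Exact (0 : Unit →ₗ[R] M₂) i₂ :=
      (LinearMap.exact_zero_iff_injective Unit i₂).mpr hi₂.injective
    exact (LinearMap.exact_zero_iff_injective Unit δ).mp <|
      SnakeLemma.exact_δ'_right i₁ i₂ i₃ f₁ f₂ hf g₁ g₂ hg h₁ h₂ _ exact_zero _ exact_ker
        _ exact_coker hf₂ hg₁ 0 (by simp) (Submodule.injective_subtype _)
  have δ_surjective : Surjective δ := by
    have exact_zero : Exact i₂ (0 : N₂ →ₗ[R] Unit) :=
      (LinearMap.exact_zero_iff_surjective Unit i₂).mpr hi₂.surjective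
    exact (LinearMap.exact_zero_iff_surjective Unit δ).mp <|
      SnakeLemma.exact_δ'_left i₁ i₂ i₃ f₁ f₂ hf g₁ g₂ hg h₁ h₂ _ exact_ker
        _ exact_coker _ exact_zero hf₂ hg₁ 0 (by simp) (Submodule.mkQ_surjective _)
  exact Nat.card_eq_of_bijective δ ⟨δ_injective, δ_surjective⟩

end Snake

theorem card_quotient_range_eq_natAbs_det {M : Type*} [AddCommGroup M] [Module.Free ℤ M]
    [Module.Finite ℤ M] {f : M →ₗ[ℤ] M} (hf : Injective f) :
    Nat.card (M ⧸ LinearMap.range f) = (LinearMap.det f).natAbs :=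
  (Submodule.natAbs_det_equiv _ (LinearEquiv.ofInjective f hf)).symm

theorem exact_compLeft {ι R L M N : Type*} [Semiring R] [AddCommMonoid L] [Module R L]
    [AddCommMonoid M] [Module R M] [AddCommMonoid N] [Module R N] {f : L →ₗ[R] M} {g : M →ₗ[R] N}
    (hfg : Exact f g) : Exact (f.compLeft ι) (g.compLeft ι) := by
  intro v
  calc g.compLeft ι v = 0
      ↔ ∀ i, ∃ x, f x = v i := funext_iff.trans (forall_congr' fun i ↦ hfg (v i))
    _ ↔ ∃ w : ι → L, ∀ i, f (w i) = v i := Classical.skolem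
    _ ↔ v ∈ Set.range (f.compLeft ι) := exists_congr fun w ↦ funext_iff.symm

section MatrixAction

variable {ι : Type*} [Fintype ι] [DecidableEq ι]

theorem bijective_matrix_smul_of_bijective_det_smul {R M : Type*} [CommRing R] [AddCommGroup M]
    [Module R M] {B : Matrix ι ι R} (hB : Bijective fun x : M ↦ B.det • x) :
    Bijective fun v : ι → M ↦ B • v := by
  have det_smul (v : ι → M) : (B.det • (1 : Matrix ι ι R)) • v = B.det • v := by
    rw [smul_assoc, one_smul]
  have det_bijective : Bijective fun v : ι → M ↦ B.det • v := Bijective.piMap fun _ ↦ hB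
  refine ⟨.of_comp (f := fun v ↦ B.adjugate • v) ?_, .of_comp (g := fun v ↦ B.adjugate • v) ?_⟩
  · simpa only [comp_def, smul_smul, adjugate_mul, det_smul] using det_bijective.injective
  · simpa only [comp_def, smul_smul, mul_adjugate, det_smul] using det_bijective.surjective

theorem card_matrix_smul_eq_zero_of_exact {M N : Type*} [AddCommGroup M] [AddCommGroup N]
    {f : ℤ →+ M} {g : M →+ N} (hfg : Exact f g) (hf : Injective f) (hg : Surjective g)
    {B : Matrix ι ι ℤ} (hB : Bijective fun x : M ↦ B.det • x) :
    Nat.card {x : ι → N | B • x = 0} = B.det.natAbs := by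
  have hfg_pi := exact_compLeft (ι := ι) (f := f.toIntLinearMap) (g := g.toIntLinearMap) hfg
  have det_ne_zero : B.det ≠ 0 := by
    intro det_eq_zero
    have f_one : f 1 = 0 := hB.injective (by simp only [det_eq_zero, zero_smul])
    exact one_ne_zero (hf (f_one.trans (map_zero f).symm))
  have toLin'_injective : Injective (toLin' B) := mulVec_injective_of_det_ne_zero det_ne_zero
  calc Nat.card (LinearMap.ker (DistribSMul.toLinearMap ℤ (ι → N) B))
      = Nat.card ((ι → ℤ) ⧸ LinearMap.range (toLin' B)) :=
        card_ker_eq_card_quotient_range_of_exact hfg_pi hfg_pi hg.comp_left hf.comp_left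
          (i₂ := DistribSMul.toLinearMap ℤ (ι → M) B)
          (LinearMap.ext fun v ↦ (f.toIntLinearMap.mapMatrixModule ι).map_smul B v)
          (LinearMap.ext fun v ↦ (g.toIntLinearMap.mapMatrixModule ι).map_smul B v)
          (bijective_matrix_smul_of_bijective_det_smul hB)
    _ = B.det.natAbs := by
      rw [card_quotient_range_eq_natAbs_det toLin'_injective, LinearMap.det_toLin']

theorem card_matrix_smul_eq_zero_addCircle {𝕜 : Type*} [DivisionRing 𝕜] [CharZero 𝕜] {p : 𝕜}
    (hp : p ≠ 0) {B : Matrix ι ι ℤ} (hB : B.det ≠ 0) :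
    Nat.card {x : ι → AddCircle p | B • x = 0} = B.det.natAbs := by
  have exact_period : Exact (zmultiplesHom 𝕜 p) (QuotientAddGroup.mk' (.zmultiples p)) :=
    fun x ↦ AddCircle.coe_eq_zero_iff p
  have det_smul_bijective : Bijective fun x : 𝕜 ↦ B.det • x := by
    simpa only [zsmul_eq_mul] using mulLeft_bijective₀ (B.det : 𝕜) (Int.cast_ne_zero.mpr hB)
  exact card_matrix_smul_eq_zero_of_exact exact_period (smul_left_injective ℤ hp)
    (QuotientAddGroup.mk'_surjective _) det_smul_bijective

theorem card_iterate_matrix_smul_eq_neg_addCircle {𝕜 : Type*} [DivisionRing 𝕜] [CharZero 𝕜]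
    {p : 𝕜} (hp : p ≠ 0) {A : Matrix ι ι ℤ} {n : ℕ} (hA : (A ^ n + 1).det ≠ 0) :
    Nat.card {x : ι → AddCircle p | (A • ·)^[n] x = -x} = (A ^ n + 1).det.natAbs := by
  simp only [← card_matrix_smul_eq_zero_addCircle hp hA, smul_iterate, eq_neg_iff_add_eq_zero,
    add_smul, one_smul]

end MatrixAction

section TwoByTwo

variable {R : Type*} [CommRing R] (A : Matrix (Fin 2) (Fin 2) R)

theorem det_add_one_fin_two : (A + 1).det = A.det + A.trace + 1 := by
  simp only [det_fin_two, trace_fin_two, Matrix.add_apply, one_apply_eq, one_apply_ne zero_ne_one,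
    one_apply_ne one_ne_zero]
  ring

theorem sq_eq_trace_smul_sub_det_smul_one_fin_two_s5 : A ^ 2 = A.trace • A - A.det • 1 := by
  nontriviality R
  have cayley_hamilton : A ^ 2 - A.trace • A + A.det • 1 = 0 := by
    simpa [charpoly_fin_two, Algebra.algebraMap_eq_smul_one] using A.aeval_self_charpoly
  rw [← sub_eq_zero, ← cayley_hamilton]
  abel

theorem trace_pow_add_two_fin_two (n : ℕ) :
    (A ^ (n + 2)).trace = A.trace * (A ^ (n + 1)).trace - A.det * (A ^ n).trace := by
  rw [pow_add, sq_eq_trace_smul_sub_det_smul_one_fin_two_s5, mul_sub, mul_smul_comm, mul_smul_comm,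
    mul_one, ← pow_succ, trace_sub, trace_smul, trace_smul, smul_eq_mul, smul_eq_mul]

variable {A} in
theorem trace_pow_eq_pow_add_pow_fin_two {x y : R} (htr : A.trace = x + y) (hdet : A.det = x * y) :
    ∀ n : ℕ, (A ^ n).trace = x ^ n + y ^ n
  | 0 => by simp [one_add_one_eq_two]
  | 1 => by simpa using htr
  | n + 2 => by
    rw [trace_pow_add_two_fin_two, trace_pow_eq_pow_add_pow_fin_two htr hdet (n + 1),
      trace_pow_eq_pow_add_pow_fin_two htr hdet n, htr, hdet]
    ring

variable {A} in
theorem det_pow_add_one_fin_two {x y : R} (htr : A.trace = x + y) (hdet : A.det = x * y) (n : ℕ) :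
    (A ^ n + 1).det = (x ^ n + 1) * (y ^ n + 1) := by
  rw [det_add_one_fin_two, det_pow, trace_pow_eq_pow_add_pow_fin_two htr hdet, hdet]
  ring

theorem intCast_det_pow_add_one_fin_two {A : Matrix (Fin 2) (Fin 2) ℤ} {x y : R}
    (htr : (A.trace : R) = x + y) (hdet : (A.det : R) = x * y) (n : ℕ) :
    ((A ^ n + 1).det : R) = (x ^ n + 1) * (y ^ n + 1) := by
  let φ : Matrix (Fin 2) (Fin 2) ℤ →+* Matrix (Fin 2) (Fin 2) R := (Int.castRingHom R).mapMatrix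
  have trace_map : (φ A).trace = x + y := by
    rw [← htr]
    exact (AddMonoidHom.map_trace (Int.castRingHom R) A).symm
  have det_map (B : Matrix (Fin 2) (Fin 2) ℤ) : (B.det : R) = (φ B).det :=
    (Int.castRingHom R).map_det B
  rw [det_map, map_add, map_pow, map_one]
  exact det_pow_add_one_fin_two trace_map ((det_map A).symm.trans hdet) n

end TwoByTwo

theorem semiconj_finTwoArrowEquiv_matrix_smul {A : Matrix.SpecialLinearGroup (Fin 2) ℤ}
    {f : Torus → Torus} (hf : ∀ v : ℝ × ℝ, f (torusMk v) = torusMk (matAct A v)) :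
    Semiconj (finTwoArrowEquiv UnitAddCircle) (A.1 • ·) f := by
  intro x
  obtain ⟨v, rfl⟩ : ∃ v : Fin 2 → ℝ, (fun i ↦ (v i : UnitAddCircle)) = x :=
    QuotientAddGroup.mk_surjective.comp_left x
  refine .trans ?_ (hf (v 0, v 1)).symm
  simp [torusMk, matAct, ← zsmul_eq_mul, Fin.sum_univ_two]

theorem card_antipodal_periodic_points_torus_eq_natAbs_det
    {A : Matrix.SpecialLinearGroup (Fin 2) ℤ} {f : Torus → Torus}
    (hf : ∀ v : ℝ × ℝ, f (torusMk v) = torusMk (matAct A v)) {n : ℕ}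
    (hA : (A.1 ^ n + 1).det ≠ 0) :
    Nat.card {x : Torus | f^[n] x = -x} = (A.1 ^ n + 1).det.natAbs := by
  rw [← card_iterate_matrix_smul_eq_neg_addCircle (one_ne_zero (α := ℝ)) hA]
  refine (Nat.card_congr ((finTwoArrowEquiv UnitAddCircle).subtypeEquiv fun x ↦ ?_)).symm
  have iterate_comm := (semiconj_finTwoArrowEquiv_matrix_smul hf).iterate_right n x
  have neg_comm : finTwoArrowEquiv UnitAddCircle (-x) = -finTwoArrowEquiv UnitAddCircle x := rfl
  rw [Set.mem_ofPred_eq, Set.mem_ofPred_eq, ← iterate_comm, ← neg_comm,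
    (finTwoArrowEquiv UnitAddCircle).apply_eq_iff_eq]

theorem card_antipodal_periodic_points_torus_general {𝕜 : Type*} [RCLike 𝕜]
    {A : Matrix.SpecialLinearGroup (Fin 2) ℤ} {lam : 𝕜} (hlam : lam ≠ 0)
    (htr : (A.1.trace : 𝕜) = lam + lam⁻¹) {f : Torus → Torus}
    (hf : ∀ v : ℝ × ℝ, f (torusMk v) = torusMk (matAct A v)) {n : ℕ} (hn : lam ^ n ≠ -1) :
    (Nat.card {x : Torus | f^[n] x = -x} : ℝ) = ‖lam ^ n + lam⁻¹ ^ n + 2‖ := by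
  have det_eq : ((A.1 ^ n + 1).det : 𝕜) = (lam ^ n + 1) * (lam⁻¹ ^ n + 1) := by
    refine intCast_det_pow_add_one_fin_two htr ?_ n
    rw [A.2, Int.cast_one, mul_inv_cancel₀ hlam]
  have det_ne_zero : (A.1 ^ n + 1).det ≠ 0 := by
    rw [← Int.cast_ne_zero (α := 𝕜), det_eq]
    have inv_pow_ne : lam⁻¹ ^ n ≠ -1 := by
      rwa [inv_pow, ne_eq, inv_eq_iff_eq_inv, inv_neg, inv_one]
    exact mul_ne_zero (mt eq_neg_of_add_eq_zero_left hn) (mt eq_neg_of_add_eq_zero_left inv_pow_ne)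
  calc (Nat.card {x : Torus | f^[n] x = -x} : ℝ)
      = ‖((A.1 ^ n + 1).det : 𝕜)‖ := by
        rw [card_antipodal_periodic_points_torus_eq_natAbs_det hf det_ne_zero, Nat.cast_natAbs,
          Int.cast_abs, ← RCLike.ofReal_intCast (K := 𝕜), RCLike.norm_ofReal]
    _ = ‖lam ^ n + lam⁻¹ ^ n + 2‖ := by
        have pow_mul_inv_pow : lam ^ n * lam⁻¹ ^ n = 1 := by
          rw [← mul_pow, mul_inv_cancel₀ hlam, one_pow]
        rw [det_eq]
        congr 1
        linear_combination pow_mul_inv_pow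

/-- `Per_n^-(f_A) = λ^n + λ^{-n} + 2`. -/
theorem card_antipodal_periodic_points_torus
    (A : Matrix.SpecialLinearGroup (Fin 2) ℤ)
    (lam : ℝ) (hlam : 1 < lam)
    -- the eigenvalues of A are lam and lam⁻¹, i.e. tr A = lam + lam⁻¹ (det A = 1)
    (htr : ((A.1 0 0 : ℤ) : ℝ) + ((A.1 1 1 : ℤ) : ℝ) = lam + lam⁻¹)
    (fA : Torus ≃ₜ Torus)
    (hfA : ∀ v : ℝ × ℝ, fA (torusMk v) = torusMk (matAct A v)) :
    ∀ n : ℕ, 1 ≤ n →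
      (Nat.card {x : Torus | fA^[n] x = -x} : ℝ) = lam ^ n + lam⁻¹ ^ n + 2 := by
  intro n _
  have lam_pos : 0 < lam := zero_lt_one.trans hlam
  have pow_pos : 0 < lam ^ n := by positivity
  rw [card_antipodal_periodic_points_torus_general lam_pos.ne'
    (by simpa [trace_fin_two] using htr) hfA (by linarith), Real.norm_of_nonneg (by positivity)]
end

section
/- For every n ≥ 1, Per_n(g_A) = Per_n(f_A)/2 + Per_n^−(f_A)/2 = λ^n + λ^{−n}. -/
open Matrix

/-!
A point `π x` is fixed by `g_Aⁿ` iff `f_Aⁿ x = ±x`. Over such a point, each `x` in the fibre counts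
once for every sign `u` with `f_Aⁿ x = u x`; by orbit–stabilizer the number of such signs times the
size of the fibre is always `2`, so the two counts on the torus add up to twice the count on the
sphere, branch points included.

For an integer matrix `B` with `det B ≠ 0`, multiplication by `B` on `0 → ℤᵈ → ℝᵈ → 𝕋ᵈ → 0` is
bijective in the middle, so by the snake lemma its kernel on `𝕋ᵈ` is isomorphic to `ℤᵈ / Bℤᵈ`, of
order `|det B|`. Hence `Bx = cx` has `|χ_B(c)|` solutions. For `B = Aⁿ` and `c = ±1` this is
`tr Aⁿ ∓ 2`, where `tr Aⁿ = λⁿ + λ⁻ⁿ > 2`.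
-/

section OrbitCounting

open MulAction Function

variable {G X S : Type*} [Group G] [MulAction G X]

theorem nonempty_transporter_equiv_stabilizer {x₀ x z : X} (hx : x ∈ orbit G x₀)
    (hz : z ∈ orbit G x₀) : Nonempty ({γ : G // γ • x = z} ≃ stabilizer G x₀) := by
  obtain ⟨a, rfl⟩ := hx
  obtain ⟨b, rfl⟩ := hz
  refine ⟨((Equiv.mulLeft b⁻¹).trans (Equiv.mulRight a)).subtypeEquiv fun γ ↦ ?_⟩
  simp [mem_stabilizer_iff, mul_smul, inv_smul_eq_iff]

theorem nonempty_sigma_orbit_transporter_equiv {h : X → X} {x₀ : X}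
    (hh : Set.MapsTo h (orbit G x₀) (orbit G x₀)) :
    Nonempty ((Σ x : orbit G x₀, {γ : G // γ • (x : X) = h x}) ≃ G) :=
  ⟨(Equiv.sigmaCongrRight fun x ↦
      (nonempty_transporter_equiv_stabilizer x.2 (hh x.2)).some).trans <|
    (Equiv.sigmaEquivProd _ _).trans (orbitProdStabilizerEquivGroup G x₀)⟩

variable {π : X → S} {h : X → X} {g : S → S}

theorem nonempty_sigma_transporter_equiv_fixedPoints_prod (hπsurj : Surjective π)
    (hπ : ∀ x y, π x = π y ↔ x ∈ orbit G y) (hg : Semiconj π h g) :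
    Nonempty ((Σ x : X, {γ : G // γ • x = h x}) ≃ fixedPoints g × G) := by
  have proj_mem (e : Σ x : X, {γ : G // γ • x = h x}) : π e.1 ∈ fixedPoints g := by
    rw [mem_fixedPoints, IsFixedPt, ← hg, hπ, ← e.2.2]
    exact mem_orbit _ _
  have fiber_equiv (y : fixedPoints g) :
      Nonempty ({e : Σ x : X, {γ : G // γ • x = h x} // (⟨π e.1, proj_mem e⟩ : fixedPoints g) = y}
        ≃ G) := by
    obtain ⟨y, hy⟩ := y
    obtain ⟨x₀, rfl⟩ := hπsurj y
    have mapsTo : Set.MapsTo h (orbit G x₀) (orbit G x₀) := fun x hx ↦ by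
      rw [← hπ] at hx ⊢
      rw [hg, hx, hy]
    obtain ⟨orbit_equiv⟩ := nonempty_sigma_orbit_transporter_equiv mapsTo
    refine ⟨Equiv.trans ?_ orbit_equiv⟩
    exact
      { toFun := fun e ↦ ⟨⟨e.1.1, (hπ _ _).1 (congrArg Subtype.val e.2)⟩, e.1.2⟩
        invFun := fun e ↦ ⟨⟨e.1, e.2⟩, Subtype.ext ((hπ _ _).2 e.1.2)⟩ }
  exact ⟨(Equiv.sigmaFiberEquiv fun e ↦ (⟨π e.1, proj_mem e⟩ : fixedPoints g)).symm.trans <|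
    (Equiv.sigmaCongrRight fun y ↦ (fiber_equiv y).some).trans (Equiv.sigmaEquivProd _ _)⟩

-- For `h = id` this is Burnside's lemma.
theorem sum_card_apply_eq_smul [Fintype G] (hπsurj : Surjective π)
    (hπ : ∀ x y, π x = π y ↔ x ∈ orbit G y) (hg : Semiconj π h g)
    (hfin : ∀ γ : G, {x | h x = γ • x}.Finite) :
    ∑ γ : G, Nat.card {x | h x = γ • x} = Nat.card G * Nat.card (fixedPoints g) := by
  have (γ : G) : Finite {x | h x = γ • x} := hfin γ
  obtain ⟨equiv⟩ := nonempty_sigma_transporter_equiv_fixedPoints_prod hπsurj hπ hg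
  let swap : (Σ γ : G, {x | h x = γ • x}) ≃ Σ x : X, {γ : G // γ • x = h x} :=
    { toFun := fun e ↦ ⟨e.2, e.1, e.2.2.symm⟩
      invFun := fun e ↦ ⟨e.2, e.1, e.2.2.symm⟩ }
  rw [← Nat.card_sigma, Nat.card_congr (swap.trans equiv), Nat.card_prod, mul_comm]

end OrbitCounting

section Antipodes

open MulAction Function

variable {M S : Type*} [AddCommGroup M]

theorem mem_orbit_units_int_iff {x y : M} : x ∈ orbit ℤˣ y ↔ x = y ∨ x = -y := by
  rw [mem_orbit_iff]
  constructor
  · rintro ⟨u, rfl⟩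
    obtain rfl | rfl := Int.units_eq_one_or u <;> simp [Units.smul_def]
  · rintro (rfl | rfl)
    exacts [⟨1, one_smul _ _⟩, ⟨-1, by simp [Units.smul_def]⟩]

theorem card_eq_self_add_card_eq_neg {π : M → S} {h : M → M} {g : S → S}
    (hπsurj : Surjective π) (hπ : ∀ x y, π x = π y ↔ x = y ∨ x = -y) (hg : Semiconj π h g)
    (hfin : {x | h x = x}.Finite) (hfin_neg : {x | h x = -x}.Finite) :
    Nat.card {x | h x = x} + Nat.card {x | h x = -x} = 2 * Nat.card (fixedPoints g) := by
  have hfin_units (u : ℤˣ) : {x | h x = u • x}.Finite := by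
    obtain rfl | rfl := Int.units_eq_one_or u <;> simpa [Units.smul_def]
  simpa [UnitsInt.univ, Units.smul_def] using
    sum_card_apply_eq_smul (G := ℤˣ) hπsurj
      (fun x y ↦ (hπ x y).trans mem_orbit_units_int_iff.symm) hg hfin_units

end Antipodes

theorem card_ker_eq_index_range_of_exact {L L' V V' T T' : Type*} [AddGroup L] [AddGroup L']
    [AddGroup V] [AddGroup V'] [AddGroup T] [AddGroup T'] {j : L →+ V} {p : V →+ T}
    {j' : L' →+ V'} {p' : V' →+ T'} {φ : L →+ L'} {Φ : V →+ V'} {F : T →+ T'}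
    (hexact : p.ker = j.range) (hp : Function.Surjective p)
    (hj' : Function.Injective j') (hexact' : p'.ker = j'.range)
    (hΦ : Function.Bijective Φ) (comm_left : Φ.comp j = j'.comp φ)
    (comm_right : F.comp p = p'.comp Φ) :
    Nat.card F.ker = φ.range.index := by
  have ker_eq : F.ker = (p'.ker.comap Φ).map p := by
    rw [AddMonoidHom.comap_ker, ← comm_right, ← AddMonoidHom.comap_ker,
      AddSubgroup.map_comap_eq_self_of_surjective hp]
  calc Nat.card F.ker
      = p.ker.relIndex (p'.ker.comap Φ) := by rw [ker_eq, AddSubgroup.relIndex_ker]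
    _ = (p.ker.map Φ).relIndex p'.ker := by
      rw [← AddSubgroup.relIndex_map_map_of_injective _ _ hΦ.1,
        AddSubgroup.map_comap_eq_self_of_surjective hΦ.2]
    _ = (φ.range.map j').relIndex (AddSubgroup.map j' ⊤) := by
      rw [hexact, hexact', AddMonoidHom.map_range, comm_left, AddMonoidHom.map_range,
        ← AddMonoidHom.range_eq_map]
    _ = φ.range.index := by
      rw [AddSubgroup.relIndex_map_map_of_injective _ _ hj', AddSubgroup.relIndex_top_right]

theorem index_range_eq_natAbs_det_s7 {M : Type*} [AddCommGroup M] [Module.Free ℤ M]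
    [Module.Finite ℤ M] {φ : M →ₗ[ℤ] M} (hφ : φ.det ≠ 0) :
    φ.toAddMonoidHom.range.index = φ.det.natAbs := by
  have injective : Function.Injective φ :=
    LinearMap.ker_eq_bot.1 (not_not.1 (LinearMap.det_eq_zero_iff_ker_ne_bot.not.1 hφ))
  exact (Submodule.natAbs_det_equiv (LinearMap.range φ) (LinearEquiv.ofInjective φ injective)).symm

section ToralEndomorphism

open scoped Matrix.Module

variable {ι : Type*} [Fintype ι] [DecidableEq ι]

theorem smul_eq_map_intCast_mulVec {R : Type*} [Ring R] (B : Matrix ι ι ℤ) (v : ι → R) :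
    B • v = B.map (Int.cast : ℤ → R) *ᵥ v := by
  ext i
  simp [mulVec, dotProduct]

theorem smul_bijective_of_det_ne_zero (K : Type*) [Field K] [CharZero K] {B : Matrix ι ι ℤ}
    (hB : B.det ≠ 0) : Function.Bijective (B • · : (ι → K) → ι → K) := by
  have isUnit_map : IsUnit (B.map (Int.cast : ℤ → K)) := by
    rw [isUnit_iff_isUnit_det, ← Int.cast_det]
    exact (Int.cast_ne_zero.2 hB).isUnit
  simp_rw [smul_eq_map_intCast_mulVec]
  exact ⟨mulVec_injective_iff_isUnit.2 isUnit_map, mulVec_surjective_iff_isUnit.2 isUnit_map⟩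

variable (ι) in
/-- The inclusion `ℤᵈ → ℝᵈ`, bundled as a linear map over the ring of integer matrices so that
linearity expresses compatibility with every toral endomorphism at once. -/
def latticeInclusion : (ι → ℤ) →ₗ[Matrix ι ι ℤ] (ι → ℝ) :=
  (Int.castAddHom ℝ).toIntLinearMap.mapMatrixModule ι

variable (ι) in
/-- The quotient map `ℝᵈ → 𝕋ᵈ`, bundled as a linear map over the ring of integer matrices. -/
def unitAddTorusMk : (ι → ℝ) →ₗ[Matrix ι ι ℤ] UnitAddTorus ι :=
  (QuotientAddGroup.mk' (AddSubgroup.zmultiples (1 : ℝ))).toIntLinearMap.mapMatrixModule ι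

theorem latticeInclusion_injective : Function.Injective (latticeInclusion ι) :=
  Int.cast_injective.comp_left

theorem unitAddTorusMk_surjective : Function.Surjective (unitAddTorusMk ι) :=
  (QuotientAddGroup.mk'_surjective _).comp_left

theorem ker_unitAddTorusMk :
    (unitAddTorusMk ι).toAddMonoidHom.ker = (latticeInclusion ι).toAddMonoidHom.range := by
  ext v
  have mem_ker_iff :
      v ∈ (unitAddTorusMk ι).toAddMonoidHom.ker ↔ ∀ i, ∃ m : ℤ, (m : ℝ) = v i := by
    simp [AddMonoidHom.mem_ker, unitAddTorusMk, funext_iff, AddSubgroup.mem_zmultiples_iff]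
  rw [mem_ker_iff, Classical.skolem]
  simp [latticeInclusion, funext_iff]

theorem card_smul_eq_zero {B : Matrix ι ι ℤ} (hB : B.det ≠ 0) :
    Nat.card {x : UnitAddTorus ι | B • x = 0} = B.det.natAbs := by
  have comm_left : (DistribSMul.toAddMonoidHom (ι → ℝ) B).comp
      (latticeInclusion ι).toAddMonoidHom =
        (latticeInclusion ι).toAddMonoidHom.comp B.toLin'.toAddMonoidHom :=
    AddMonoidHom.ext fun m ↦ ((latticeInclusion ι).map_smul B m).symm
  have comm_right : (DistribSMul.toAddMonoidHom (UnitAddTorus ι) B).comp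
      (unitAddTorusMk ι).toAddMonoidHom =
        (unitAddTorusMk ι).toAddMonoidHom.comp (DistribSMul.toAddMonoidHom (ι → ℝ) B) :=
    AddMonoidHom.ext fun v ↦ ((unitAddTorusMk ι).map_smul B v).symm
  calc Nat.card {x : UnitAddTorus ι | B • x = 0}
      = B.toLin'.toAddMonoidHom.range.index :=
      card_ker_eq_index_range_of_exact ker_unitAddTorusMk unitAddTorusMk_surjective
        latticeInclusion_injective ker_unitAddTorusMk (smul_bijective_of_det_ne_zero ℝ hB)
        comm_left comm_right
    _ = B.det.natAbs := by
      rw [index_range_eq_natAbs_det_s7 (by rwa [LinearMap.det_toLin']), LinearMap.det_toLin']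

theorem card_smul_eq_zsmul {B : Matrix ι ι ℤ} {c : ℤ} (hc : B.charpoly.eval c ≠ 0) :
    Nat.card {x : UnitAddTorus ι | B • x = c • x} = (B.charpoly.eval c).natAbs := by
  rw [Matrix.eval_charpoly] at hc ⊢
  simp_rw [← card_smul_eq_zero hc, sub_smul, Matrix.Module.scalar_smul, sub_eq_zero, eq_comm]

end ToralEndomorphism

section FinTwo

variable {R : Type*} [CommRing R]

theorem sq_eq_trace_smul_sub_det_smul_one (A : Matrix (Fin 2) (Fin 2) R) :
    A ^ 2 = A.trace • A - A.det • 1 := by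
  nontriviality R
  have cayley_hamilton := A.aeval_self_charpoly
  simp only [charpoly_fin_two, map_add, map_sub, map_mul, map_pow, Polynomial.aeval_X,
    Polynomial.aeval_C, Algebra.algebraMap_eq_smul_one, smul_one_mul] at cayley_hamilton
  rw [← sub_eq_zero, ← cayley_hamilton]
  abel

theorem trace_pow_eq_pow_add_pow {A : Matrix (Fin 2) (Fin 2) R} {a b : R}
    (htr : A.trace = a + b) (hdet : A.det = a * b) (n : ℕ) :
    (A ^ n).trace = a ^ n + b ^ n := by
  induction n using Nat.twoStepInduction with
  | zero => simp [one_add_one_eq_two]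
  | one => simpa using htr
  | more n ih ih_succ =>
    have recurrence : A ^ (n + 2) = A.trace • A ^ (n + 1) - A.det • A ^ n := by
      rw [pow_add, sq_eq_trace_smul_sub_det_smul_one, mul_sub, mul_smul_comm, mul_smul_comm,
        mul_one, pow_succ]
    rw [recurrence, trace_sub, trace_smul, trace_smul, ih, ih_succ, htr, hdet, smul_eq_mul,
      smul_eq_mul]
    ring

theorem eval_charpoly_fin_two [Nontrivial R] (A : Matrix (Fin 2) (Fin 2) R) (c : R) :
    A.charpoly.eval c = c ^ 2 - A.trace * c + A.det := by
  simp [charpoly_fin_two]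

end FinTwo

theorem trace_pow_of_trace_eq_add_inv {K : Type*} [Field K]
    {A : SpecialLinearGroup (Fin 2) ℤ} {lam : K} (hlam : lam ≠ 0)
    (htr : (A.1 0 0 : K) + A.1 1 1 = lam + lam⁻¹) (n : ℕ) :
    ((A.1 ^ n).trace : K) = lam ^ n + lam⁻¹ ^ n := by
  let A' : Matrix (Fin 2) (Fin 2) K := (Int.castRingHom K).mapMatrix A.1
  have trace_eq : A'.trace = lam + lam⁻¹ := by simpa [A', trace_fin_two] using htr
  have det_eq : A'.det = lam * lam⁻¹ := by
    rw [← RingHom.map_det, A.2, map_one, mul_inv_cancel₀ hlam]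
  rw [← trace_pow_eq_pow_add_pow trace_eq det_eq, ← map_pow]
  simp [trace_fin_two]

theorem two_lt_add_inv {K : Type*} [Field K] [LinearOrder K] [IsStrictOrderedRing K] {a : K}
    (ha : 1 < a) : 2 < a + a⁻¹ := by
  have a_pos : 0 < a := one_pos.trans ha
  have sq_div_pos : 0 < (a - 1) ^ 2 / a := div_pos (pow_pos (sub_pos.2 ha) 2) a_pos
  have sq_div_eq : (a - 1) ^ 2 / a = a + a⁻¹ - 2 := by
    field_simp
    ring
  linarith

section Torus

open Function
open scoped Matrix.Module

variable {A : SpecialLinearGroup (Fin 2) ℤ} {f : Torus → Torus}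

theorem torusMk_surjective : Surjective torusMk :=
  QuotientAddGroup.mk_surjective.prodMap QuotientAddGroup.mk_surjective

/-- The identification of the product of two circles with Mathlib's torus `𝕋ᵈ` for `d = 2`, on which
integer matrices act. -/
abbrev torusEquiv : Torus ≃ₗ[ℤ] UnitAddTorus (Fin 2) :=
  (LinearEquiv.finTwoArrow ℤ UnitAddCircle).symm

theorem torusEquiv_torusMk_matAct (A : SpecialLinearGroup (Fin 2) ℤ) (v : ℝ × ℝ) :
    torusEquiv (torusMk (matAct A v)) = A.1 • torusEquiv (torusMk v) := by
  ext i
  fin_cases i <;> simp [torusMk, matAct, Fin.sum_univ_two, ← zsmul_eq_mul]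

theorem semiconj_torusEquiv_iterate (hf : ∀ v, f (torusMk v) = torusMk (matAct A v))
    (n : ℕ) :
    Semiconj torusEquiv f^[n] (A.1 ^ n • ·) := by
  have semiconj : Semiconj torusEquiv f (A.1 • ·) := by
    intro x
    obtain ⟨v, rfl⟩ := torusMk_surjective x
    rw [hf, torusEquiv_torusMk_matAct]
  simpa only [smul_iterate] using semiconj.iterate_right n

theorem card_iterate_eq_zsmul (hf : ∀ v, f (torusMk v) = torusMk (matAct A v)) {n : ℕ}
    {c : ℤ} (hc : (A.1 ^ n).charpoly.eval c ≠ 0) :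
    Nat.card {x | f^[n] x = c • x} = ((A.1 ^ n).charpoly.eval c).natAbs := by
  rw [← card_smul_eq_zsmul hc]
  refine Nat.card_congr (torusEquiv.toEquiv.subtypeEquiv fun x ↦ ?_)
  change f^[n] x = c • x ↔ A.1 ^ n • torusEquiv x = c • torusEquiv x
  rw [← (semiconj_torusEquiv_iterate hf n).eq, ← map_zsmul, EmbeddingLike.apply_eq_iff_eq]

theorem card_iterate_eq_self (hf : ∀ v, f (torusMk v) = torusMk (matAct A v)) {n : ℕ}
    (htr : 2 < (A.1 ^ n).trace) :
    (Nat.card {x | f^[n] x = x} : ℤ) = (A.1 ^ n).trace - 2 := by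
  have eval_eq : (A.1 ^ n).charpoly.eval 1 = 2 - (A.1 ^ n).trace := by
    rw [eval_charpoly_fin_two, det_pow, A.2]
    ring
  have card_eq := card_iterate_eq_zsmul hf (n := n) (c := 1) (by lia)
  simp only [one_smul] at card_eq
  lia

theorem card_iterate_eq_neg (hf : ∀ v, f (torusMk v) = torusMk (matAct A v)) {n : ℕ}
    (htr : -2 < (A.1 ^ n).trace) :
    (Nat.card {x | f^[n] x = -x} : ℤ) = (A.1 ^ n).trace + 2 := by
  have eval_eq : (A.1 ^ n).charpoly.eval (-1) = 2 + (A.1 ^ n).trace := by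
    rw [eval_charpoly_fin_two, det_pow, A.2]
    ring
  have card_eq := card_iterate_eq_zsmul hf (n := n) (c := -1) (by lia)
  simp only [neg_smul, one_smul] at card_eq
  lia

end Torus

theorem card_periodic_points_quotient_general
    (A : SpecialLinearGroup (Fin 2) ℤ) (lam : ℝ) (hlam : 1 < lam)
    (htr : (A.1 0 0 : ℝ) + A.1 1 1 = lam + lam⁻¹)
    (f : Torus → Torus) (hf : ∀ v, f (torusMk v) = torusMk (matAct A v))
    {S : Type*} (π : Torus → S) (hπsurj : Function.Surjective π)
    (hπ : ∀ x y, π x = π y ↔ x = y ∨ x = -y)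
    (g : S → S) (hg : Function.Semiconj π f g) (n : ℕ) (hn : 1 ≤ n) :
    (Nat.card {y | g^[n] y = y} : ℝ) =
        (Nat.card {x | f^[n] x = x} : ℝ) / 2 + (Nat.card {x | f^[n] x = -x} : ℝ) / 2 ∧
      (Nat.card {y | g^[n] y = y} : ℝ) = lam ^ n + lam⁻¹ ^ n := by
  have trace_eq : ((A.1 ^ n).trace : ℝ) = lam ^ n + lam⁻¹ ^ n :=
    trace_pow_of_trace_eq_add_inv (by positivity) htr n
  have two_lt_trace : 2 < (A.1 ^ n).trace := by
    have := two_lt_add_inv (one_lt_pow₀ hlam (Nat.one_le_iff_ne_zero.1 hn))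
    rw [← inv_pow, ← trace_eq] at this
    exact_mod_cast this
  have card_fixed := card_iterate_eq_self hf two_lt_trace
  have card_neg := card_iterate_eq_neg hf (by lia : -2 < (A.1 ^ n).trace)
  have card_add : Nat.card {x | f^[n] x = x} + Nat.card {x | f^[n] x = -x} =
      2 * Nat.card {y | g^[n] y = y} :=
    card_eq_self_add_card_eq_neg hπsurj hπ (hg.iterate_right n)
      (Nat.finite_of_card_ne_zero (by lia)) (Nat.finite_of_card_ne_zero (by lia))
  have card_quotient : (Nat.card {y | g^[n] y = y} : ℤ) = (A.1 ^ n).trace := by lia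
  refine ⟨?_, by rw [← trace_eq, ← card_quotient, Int.cast_natCast]⟩
  rw [← add_div, eq_div_iff two_ne_zero, mul_comm]
  exact_mod_cast card_add.symm

/-- `Per_n(g_A) = Per_n(f_A)/2 + Per_n^-(f_A)/2 = λ^n + λ^{-n}`. -/
theorem card_periodic_points_quotient
    (A : Matrix.SpecialLinearGroup (Fin 2) ℤ)
    (lam : ℝ) (hlam : 1 < lam)
    (htr : ((A.1 0 0 : ℤ) : ℝ) + ((A.1 1 1 : ℤ) : ℝ) = lam + lam⁻¹)
    (fA : Torus ≃ₜ Torus)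
    (hfA : ∀ v : ℝ × ℝ, fA (torusMk v) = torusMk (matAct A v))
    -- the sphere as the quotient of the torus by the antipodal identification
    (S2 : Type) [MetricSpace S2] [CompactSpace S2]
    (π : Torus → S2) (hπcont : Continuous π) (hπsurj : Function.Surjective π)
    (hπ : ∀ x y : Torus, π x = π y ↔ (x = y ∨ x = -y))
    (gA : S2 ≃ₜ S2) (hgA : ∀ x : Torus, gA (π x) = π (fA x)) :
    ∀ n : ℕ, 1 ≤ n →
      (Nat.card {y : S2 | gA^[n] y = y} : ℝ) =
          (Nat.card {x : Torus | fA^[n] x = x} : ℝ) / 2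
            + (Nat.card {x : Torus | fA^[n] x = -x} : ℝ) / 2 ∧
      (Nat.card {y : S2 | gA^[n] y = y} : ℝ) = lam ^ n + lam⁻¹ ^ n :=
  card_periodic_points_quotient_general A lam hlam htr fA hfA π hπsurj hπ gA fun x ↦ (hgA x).symm
end

section
/- The topological entropy of g_A equals log λ, that is, h(g_A) = log λ. -/
open Matrix

open Filter Set

/-- `E` is `(n,δ)`-separated for `g`. -/
def IsSeparatedSet {Y : Type*} [MetricSpace Y] (g : Y → Y) (n : ℕ) (δ : ℝ)
    (E : Set Y) : Prop :=
  ∀ x ∈ E, ∀ y ∈ E, x ≠ y → ∃ k < n, δ < dist (g^[k] x) (g^[k] y)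

/-- `s_n(δ)`: the maximal cardinality of an `(n,δ)`-separated set for `g`. -/
noncomputable def sepMax {Y : Type*} [MetricSpace Y] (g : Y → Y) (n : ℕ) (δ : ℝ) : ℕ :=
  sSup {k : ℕ | ∃ E : Finset Y, IsSeparatedSet g n δ ↑E ∧ E.card = k}

open scoped Topology

/-!
The entropy of `g_A` is compared with that of `f_A` by Bowen's argument for the quotient by a finite
symmetry group `G`, here `{1, -1}`. If the images of two orbits of `f` stay close downstairs, then
upstairs one orbit stays close to translates of the other, and by uniform continuity of `f` the
translating element can be kept constant over blocks of any prescribed length `m`. Hence the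
preimage of a dynamical ball of `g` splits into at most `|G| ^ (n / m + 1)` pieces of small
dynamical diameter. This costs `log |G| / m` in growth rate, which disappears as `m → ∞`.

In eigencoordinates on `ℝ²`, a grid of mesh of order `λ⁻ⁿ` in the expanding and of order `1` in the
contracting direction bounds the separated sets of `f_A` from above, and points spaced by a multiple
of `λ⁻ⁿ` on a segment of the expanding eigenline bound them from below.
-/

section SeparatedSets

variable {X : Type*} [MetricSpace X] {f : X → X} {n : ℕ} {δ ε : ℝ}

theorem IsSeparatedSet.card_le_of_code {κ : Type*} {E : Finset X}
    (hE : IsSeparatedSet f n δ E) {t : Finset κ} {code : X → κ} (hmem : ∀ x, code x ∈ t)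
    (hclose : ∀ x y, code x = code y → ∀ k < n, dist (f^[k] x) (f^[k] y) ≤ δ) :
    E.card ≤ t.card := by
  refine Finset.card_le_card_of_injOn code (fun x _ => hmem x) fun x hx y hy hxy => ?_
  by_contra hne
  obtain ⟨k, hk, hlt⟩ := hE x hx y hy hne
  exact (hclose x y hxy k hk).not_gt hlt

theorem sepMax_le {N : ℕ} (h : ∀ E : Finset X, IsSeparatedSet f n δ E → E.card ≤ N) :
    sepMax f n δ ≤ N :=
  csSup_le' (by rintro _ ⟨E, hE, rfl⟩; exact h E hE)

variable [CompactSpace X]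

theorem exists_forall_separated_card_le_pow (f : X → X) (hδ : 0 < δ) :
    ∃ N : ℕ, ∀ (n : ℕ) (E : Finset X), IsSeparatedSet f n δ E → E.card ≤ N ^ n := by
  obtain ⟨t, -, htfin, htcover⟩ :=
    finite_cover_balls_of_compact (isCompact_univ (X := X)) (half_pos hδ)
  have hnear : ∀ x : X, ∃ y ∈ t, dist x y < δ / 2 := fun x => by
    simpa only [mem_iUnion₂, Metric.mem_ball, exists_prop] using htcover (mem_univ x)
  choose net hnet hdist using hnear
  refine ⟨htfin.toFinset.card, fun n E hE => ?_⟩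
  rw [← Fintype.card_fin n, ← Fintype.card_piFinset_const, Fintype.card_fin]
  refine hE.card_le_of_code (code := fun x (k : Fin n) => net (f^[k] x)) (fun x => ?_)
    fun x y hxy k hk => ?_
  · simpa only [Fintype.mem_piFinset, Finite.mem_toFinset] using fun k : Fin n => hnet (f^[k] x)
  · have hsame : net (f^[k] x) = net (f^[k] y) := congrFun hxy ⟨k, hk⟩
    calc dist (f^[k] x) (f^[k] y)
        ≤ dist (f^[k] x) (net (f^[k] x)) + dist (f^[k] y) (net (f^[k] x)) :=
          dist_triangle_right _ _ _
      _ ≤ δ / 2 + δ / 2 := add_le_add (hdist _).le (hsame ▸ (hdist _).le)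
      _ = δ := add_halves δ

theorem bddAbove_card_separated (f : X → X) (n : ℕ) (hδ : 0 < δ) :
    BddAbove {k : ℕ | ∃ E : Finset X, IsSeparatedSet f n δ ↑E ∧ E.card = k} := by
  obtain ⟨N, hN⟩ := exists_forall_separated_card_le_pow f hδ
  exact ⟨N ^ n, by rintro _ ⟨E, hE, rfl⟩; exact hN n E hE⟩

theorem IsSeparatedSet.card_le_sepMax {E : Finset X} (hE : IsSeparatedSet f n δ E) (hδ : 0 < δ) :
    E.card ≤ sepMax f n δ :=
  le_csSup (bddAbove_card_separated f n hδ) ⟨E, hE, rfl⟩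

theorem exists_separated_card_eq_sepMax (f : X → X) (n : ℕ) (hδ : 0 < δ) :
    ∃ E : Finset X, IsSeparatedSet f n δ E ∧ E.card = sepMax f n δ := by
  refine Nat.sSup_mem ?_ (bddAbove_card_separated f n hδ)
  exact ⟨0, ∅, by simp [IsSeparatedSet], rfl⟩

theorem sepMax_pos [Nonempty X] (f : X → X) (n : ℕ) (hδ : 0 < δ) : 0 < sepMax f n δ := by
  obtain ⟨x⟩ := ‹Nonempty X›
  have hx : IsSeparatedSet f n δ ({x} : Finset X) := by simp [IsSeparatedSet]
  exact hx.card_le_sepMax hδ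

theorem card_le_sepMax_of_pairwise {ι : Type*} {s : Finset ι} {x : ι → X} (hδ : 0 < δ)
    (hsep : (s : Set ι).Pairwise fun i j => ∃ k < n, δ < dist (f^[k] (x i)) (f^[k] (x j))) :
    s.card ≤ sepMax f n δ := by
  classical
  have hinj : InjOn x s := fun i hi j hj hij => by
    by_contra hne
    obtain ⟨k, -, hk⟩ := hsep hi hj hne
    rw [hij, dist_self] at hk
    exact hδ.not_gt hk
  have himage : IsSeparatedSet f n δ (s.image x) := by
    rw [Finset.coe_image]
    rintro _ ⟨i, hi, rfl⟩ _ ⟨j, hj, rfl⟩ hne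
    exact hsep hi hj fun hij => hne (congrArg x hij)
  rw [← Finset.card_image_of_injOn hinj]
  exact himage.card_le_sepMax hδ

theorem sepMax_anti (f : X → X) (n : ℕ) (hδ : 0 < δ) (hδε : δ ≤ ε) :
    sepMax f n ε ≤ sepMax f n δ := by
  refine sepMax_le fun E hE => IsSeparatedSet.card_le_sepMax (fun x hx y hy hne => ?_) hδ
  obtain ⟨k, hk, hlt⟩ := hE x hx y hy hne
  exact ⟨k, hk, hδε.trans_lt hlt⟩

theorem exists_spanning_card_eq_sepMax (f : X → X) (n : ℕ) (hδ : 0 < δ) :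
    ∃ F : Finset X, F.card = sepMax f n δ ∧
      ∀ x, ∃ y ∈ F, ∀ k < n, dist (f^[k] x) (f^[k] y) ≤ δ := by
  classical
  obtain ⟨F, hF, hcard⟩ := exists_separated_card_eq_sepMax f n hδ
  refine ⟨F, hcard, fun x => ?_⟩
  by_contra! hfar
  have hxF : x ∉ F := fun hx => by
    obtain ⟨k, -, hk⟩ := hfar x hx
    rw [dist_self] at hk
    exact hδ.not_gt hk
  have hinsert : IsSeparatedSet f n δ ↑(insert x F) := by
    intro a ha b hb hne
    rcases Finset.mem_insert.1 ha with rfl | haF <;> rcases Finset.mem_insert.1 hb with rfl | hbF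
    · exact absurd rfl hne
    · exact hfar b hbF
    · simpa only [dist_comm] using hfar a haF
    · exact hF a haF b hbF hne
  have hle := hinsert.card_le_sepMax hδ
  rw [Finset.card_insert_of_notMem hxF] at hle
  omega

end SeparatedSets

section GrowthRate

theorem limsup_div_le_limsup_div_add {u v : ℕ → ℝ} {a C : ℝ} (hu : ∀ n, 0 ≤ u n)
    (hv : ∀ n, 0 ≤ v n) (hbdd : IsBoundedUnder (· ≤ ·) atTop fun n : ℕ => v n / n)
    (huv : ∀ n : ℕ, u n ≤ v n + (C + n * a)) :
    limsup (fun n : ℕ => u n / n) atTop ≤ limsup (fun n : ℕ => v n / n) atTop + a := by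
  have herr : Tendsto (fun n : ℕ => C / n + a) atTop (𝓝 a) := by
    simpa only [zero_add] using (tendsto_const_div_atTop_nhds_zero_nat C).add_const a
  have hle : ∀ᶠ n : ℕ in atTop, u n / n ≤ v n / n + (C / n + a) := by
    filter_upwards [eventually_ne_atTop 0] with n hn
    calc u n / n ≤ (v n + (C + n * a)) / n := by gcongr; exact huv n
      _ = v n / n + (C / n + a) := by
        rw [add_div, add_div, mul_div_cancel_left₀ a (Nat.cast_ne_zero.2 hn)]
  have hlow : IsBoundedUnder (· ≥ ·) atTop fun n : ℕ => v n / n :=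
    isBoundedUnder_of ⟨0, fun n => div_nonneg (hv n) n.cast_nonneg⟩
  have hulow : IsBoundedUnder (· ≥ ·) atTop fun n : ℕ => u n / n :=
    isBoundedUnder_of ⟨0, fun n => div_nonneg (hu n) n.cast_nonneg⟩
  calc limsup (fun n : ℕ => u n / n) atTop
      ≤ limsup ((fun n : ℕ => v n / n) + fun n : ℕ => C / n + a) atTop :=
        limsup_le_limsup hle hulow.isCoboundedUnder_le
          (isBoundedUnder_le_add hbdd herr.isBoundedUnder_le)
    _ ≤ limsup (fun n : ℕ => v n / n) atTop + limsup (fun n : ℕ => C / n + a) atTop :=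
        limsup_add_le hlow hbdd herr.isCoboundedUnder_le herr.isBoundedUnder_le
    _ = limsup (fun n : ℕ => v n / n) atTop + a := by rw [herr.limsup_eq]

/-- The exponential growth rate of `s_n(δ)` at a fixed scale `δ`; the topological entropy in Bowen's
sense is its limit as `δ → 0`. -/
noncomputable def sepGrowthRate {X : Type*} [MetricSpace X] (f : X → X) (δ : ℝ) : ℝ :=
  limsup (fun n : ℕ => Real.log (sepMax f n δ) / n) atTop

variable {X Y : Type*} [MetricSpace X] [MetricSpace Y] [CompactSpace Y] {f : X → X} {g : Y → Y}
  {δ ε : ℝ}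

theorem isBoundedUnder_log_sepMax_div (g : Y → Y) (hδ : 0 < δ) :
    IsBoundedUnder (· ≤ ·) atTop fun n : ℕ => Real.log (sepMax g n δ) / n := by
  obtain ⟨N, hN⟩ := exists_forall_separated_card_le_pow g hδ
  refine isBoundedUnder_of ⟨Real.log N, fun n => div_le_of_le_mul₀ n.cast_nonneg
    (Real.log_natCast_nonneg N) ?_⟩
  rcases (sepMax g n δ).eq_zero_or_pos with hzero | hpos
  · simpa [hzero] using mul_nonneg (Real.log_natCast_nonneg N) n.cast_nonneg
  · calc Real.log (sepMax g n δ) ≤ Real.log ((N : ℝ) ^ n) :=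
          Real.log_le_log (Nat.cast_pos.2 hpos) (mod_cast sepMax_le (hN n))
      _ = Real.log N * n := by rw [Real.log_pow, mul_comm]

theorem sepGrowthRate_le_add_log_div {N m : ℕ} (hδ : 0 < δ)
    (h : ∀ n, sepMax f n ε ≤ N ^ (n / m + 1) * sepMax g n δ) :
    sepGrowthRate f ε ≤ sepGrowthRate g δ + Real.log N / m := by
  refine limsup_div_le_limsup_div_add (C := Real.log N) (fun n => Real.log_natCast_nonneg _)
    (fun n => Real.log_natCast_nonneg _) (isBoundedUnder_log_sepMax_div g hδ) fun n => ?_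
  have hlogN := Real.log_natCast_nonneg N
  rcases (sepMax f n ε).eq_zero_or_pos with hzero | hpos
  · rw [hzero, Nat.cast_zero, Real.log_zero]
    exact add_nonneg (Real.log_natCast_nonneg _) (add_nonneg hlogN
      (mul_nonneg n.cast_nonneg (div_nonneg hlogN m.cast_nonneg)))
  · have hprod : 0 < N ^ (n / m + 1) * sepMax g n δ := hpos.trans_le (h n)
    have hpow : ((N : ℝ) ^ (n / m + 1)) ≠ 0 := mod_cast (Nat.pos_of_mul_pos_right hprod).ne'
    have hsep : (sepMax g n δ : ℝ) ≠ 0 := mod_cast (Nat.pos_of_mul_pos_left hprod).ne'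
    calc Real.log (sepMax f n ε)
        ≤ Real.log ((N : ℝ) ^ (n / m + 1) * sepMax g n δ) :=
          Real.log_le_log (Nat.cast_pos.2 hpos) (mod_cast h n)
      _ = Real.log (sepMax g n δ) + (Real.log N + (n / m : ℕ) * Real.log N) := by
          rw [Real.log_mul hpow hsep, Real.log_pow]; push_cast; ring
      _ ≤ Real.log (sepMax g n δ) + (Real.log N + n / m * Real.log N) := by
          gcongr; exact Nat.cast_div_le
      _ = Real.log (sepMax g n δ) + (Real.log N + n * (Real.log N / m)) := by ring

theorem sepGrowthRate_mono (hδ : 0 < δ) (h : ∀ n, sepMax f n ε ≤ sepMax g n δ) :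
    sepGrowthRate f ε ≤ sepGrowthRate g δ := by
  simpa using sepGrowthRate_le_add_log_div (N := 1) (m := 1) hδ (by simpa using h)

theorem sepGrowthRate_anti (g : Y → Y) (hδ : 0 < δ) (hδε : δ ≤ ε) :
    sepGrowthRate g ε ≤ sepGrowthRate g δ :=
  sepGrowthRate_mono hδ fun n => sepMax_anti g n hδ hδε

theorem sepGrowthRate_le_log [Nonempty Y] {K lam : ℝ} (hδ : 0 < δ) (hlam : 0 < lam)
    (h : ∀ n, (sepMax g n δ : ℝ) ≤ K * lam ^ n) : sepGrowthRate g δ ≤ Real.log lam := by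
  have hpos (n : ℕ) : (0 : ℝ) < sepMax g n δ := Nat.cast_pos.2 (sepMax_pos g n hδ)
  have hK : 0 < K := by simpa using (hpos 0).trans_le (h 0)
  have hlog : ∀ n : ℕ, Real.log (sepMax g n δ) ≤ 0 + (Real.log K + n * Real.log lam) := fun n => by
    rw [zero_add, ← Real.log_pow, ← Real.log_mul hK.ne' (pow_pos hlam n).ne']
    exact Real.log_le_log (hpos n) (h n)
  have hzero : Tendsto (fun n : ℕ => (0 : ℝ) / n) atTop (𝓝 0) :=
    tendsto_const_div_atTop_nhds_zero_nat 0
  simpa only [sepGrowthRate, hzero.limsup_eq, zero_add] using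
    limsup_div_le_limsup_div_add (fun n => Real.log_natCast_nonneg _) (fun _ => le_rfl)
      hzero.isBoundedUnder_le hlog

theorem log_le_sepGrowthRate {lam : ℝ} (hδ : 0 < δ) (hlam : 1 ≤ lam)
    (h : ∀ n, lam ^ n ≤ sepMax g (n + 1) δ) : Real.log lam ≤ sepGrowthRate g δ := by
  have hloglam : 0 ≤ Real.log lam := Real.log_nonneg hlam
  have hlog : ∀ n : ℕ, n * Real.log lam ≤
      Real.log (sepMax g n δ) + (Real.log lam + n * 0) := fun n => by
    rcases n with _ | n
    · simpa using add_nonneg (Real.log_natCast_nonneg (sepMax g 0 δ)) hloglam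
    · have := Real.log_le_log (pow_pos (one_pos.trans_le hlam) n) (h n)
      rw [Real.log_pow] at this
      push_cast
      linarith
  have hlimsup : limsup (fun n : ℕ => n * Real.log lam / n) atTop = Real.log lam :=
    Tendsto.limsup_eq <| tendsto_const_nhds.congr' <| by
      filter_upwards [eventually_ne_atTop 0] with n hn
      exact (mul_div_cancel_left₀ _ (Nat.cast_ne_zero.2 hn)).symm
  simpa only [sepGrowthRate, hlimsup, add_zero] using
    limsup_div_le_limsup_div_add (fun n => mul_nonneg n.cast_nonneg hloglam)
      (fun n => Real.log_natCast_nonneg _) (isBoundedUnder_log_sepMax_div g hδ) hlog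

end GrowthRate

section FiniteQuotient

variable {X Y : Type*} [MetricSpace X] [CompactSpace X] [MetricSpace Y] {f : X → X} {g : Y → Y}
  {π : X → Y}

theorem exists_sepMax_le_of_semiconj (hπ : Continuous π) (hsurj : Function.Surjective π)
    (hsemi : Function.Semiconj π f g) {δ : ℝ} (hδ : 0 < δ) :
    ∃ ε > 0, ∀ n, sepMax g n δ ≤ sepMax f n ε := by
  obtain ⟨ε, hε, hεδ⟩ := Metric.uniformContinuous_iff.1
    (CompactSpace.uniformContinuous_of_continuous hπ) δ hδ
  refine ⟨ε / 2, half_pos hε, fun n => sepMax_le fun E hE =>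
    card_le_sepMax_of_pairwise (x := Function.surjInv hsurj) (half_pos hε)
      fun y hy z hz hne => ?_⟩
  obtain ⟨k, hk, hlt⟩ := hE y hy z hz hne
  refine ⟨k, hk, (half_lt_self hε).trans_le (le_of_not_gt fun hclose => ?_)⟩
  have := hεδ hclose
  rw [hsemi.iterate_right k, hsemi.iterate_right k, Function.surjInv_eq hsurj,
    Function.surjInv_eq hsurj] at this
  exact this.not_gt hlt

theorem exists_forall_dist_iterate_lt (hf : Continuous f) (m : ℕ) {ε : ℝ} (hε : 0 < ε) :
    ∃ η > 0, ∀ x y, dist x y < η → ∀ j < m, dist (f^[j] x) (f^[j] y) < ε := by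
  have horbit : UniformContinuous fun (x : X) (j : Fin m) => f^[j] x :=
    CompactSpace.uniformContinuous_of_continuous (continuous_pi fun j => hf.iterate j)
  obtain ⟨η, hη, h⟩ := Metric.uniformContinuous_iff.1 horbit ε hε
  exact ⟨η, hη, fun x y hxy j hj => (dist_le_pi_dist _ _ (⟨j, hj⟩ : Fin m)).trans_lt (h hxy)⟩

variable {G : Type*} [SMul G X] [ContinuousConstSMul G X]

theorem exists_dist_smul_lt_of_dist_map_le (hπ : Continuous π)
    (hfib : ∀ x y, π x = π y → ∃ a : G, x = a • y) {ε : ℝ} (hε : 0 < ε) :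
    ∃ δ > 0, ∀ x y, dist (π x) (π y) ≤ δ → ∃ a : G, dist x (a • y) < ε := by
  let far : Set (X × X) := ⋂ a : G, {p | ε ≤ dist p.1 (a • p.2)}
  have hcompact : IsCompact far := IsClosed.isCompact <| isClosed_iInter fun a =>
    isClosed_le continuous_const (by fun_prop)
  have hpos : ∀ p ∈ far, 0 < dist (π p.1) (π p.2) := fun p hp => dist_pos.2 fun heq => by
    obtain ⟨a, ha⟩ := hfib _ _ heq
    have hle : ε ≤ dist p.1 (a • p.2) := mem_iInter.1 hp a
    rw [ha, dist_self] at hle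
    exact hle.not_gt hε
  obtain ⟨δ, hδ, hlt⟩ := hcompact.exists_forall_le' (f := fun p => dist (π p.1) (π p.2))
    (by fun_prop) hpos
  refine ⟨δ / 2, half_pos hδ, fun x y hxy => ?_⟩
  by_contra! hfar
  exact (half_lt_self hδ).not_ge ((hlt (x, y) (mem_iInter.2 hfar)).trans hxy)

theorem exists_smul_shadowing_on_blocks (hf : Continuous f) (hπ : Continuous π)
    (hfib : ∀ x y, π x = π y → ∃ a : G, x = a • y)
    (hcomm : ∀ a : G, Function.Commute f (a • ·)) {m : ℕ} (hm : 0 < m) {ε : ℝ} (hε : 0 < ε) :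
    ∃ δ > 0, ∀ n x z, (∀ k < n, dist (π (f^[k] x)) (π (f^[k] z)) ≤ δ) →
      ∃ a : ℕ → G, ∀ k < n, dist (f^[k] x) (a (k / m) • f^[k] z) < ε := by
  obtain ⟨η, hη, hblock⟩ := exists_forall_dist_iterate_lt hf m hε
  obtain ⟨δ, hδ, hlift⟩ := exists_dist_smul_lt_of_dist_map_le hπ hfib hη
  refine ⟨δ, hδ, fun n x z hclose => ?_⟩
  obtain ⟨a₀, -⟩ := hfib x x rfl
  have hstart : ∀ i, ∃ a : G, i * m < n → dist (f^[i * m] x) (a • f^[i * m] z) < η := fun i => by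
    by_cases hi : i * m < n
    · obtain ⟨a, ha⟩ := hlift _ _ (hclose _ hi)
      exact ⟨a, fun _ => ha⟩
    · exact ⟨a₀, fun h => absurd h hi⟩
  choose a ha using hstart
  refine ⟨a, fun k hk => ?_⟩
  have hdist := hblock _ _ (ha (k / m) ((Nat.div_mul_le_self k m).trans_lt hk)) (k % m)
    (Nat.mod_lt k hm)
  rwa [(hcomm _).iterate_left (k % m), ← Function.iterate_add_apply, ← Function.iterate_add_apply,
    Nat.mod_add_div'] at hdist

variable [CompactSpace Y] [Finite G]

theorem exists_sepMax_le_card_pow_mul (hf : Continuous f) (hπ : Continuous π)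
    (hsurj : Function.Surjective π) (hsemi : Function.Semiconj π f g)
    (hfib : ∀ x y, π x = π y → ∃ a : G, x = a • y)
    (hcomm : ∀ a : G, Function.Commute f (a • ·)) {m : ℕ} (hm : 0 < m) {ε : ℝ} (hε : 0 < ε) :
    ∃ δ > 0, ∀ n, sepMax f n ε ≤ Nat.card G ^ (n / m + 1) * sepMax g n δ := by
  have := Fintype.ofFinite G
  obtain ⟨δ, hδ, hshadow⟩ :=
    exists_smul_shadowing_on_blocks hf hπ hfib hcomm hm (half_pos hε)
  refine ⟨δ, hδ, fun n => ?_⟩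
  obtain ⟨F, hFcard, hF⟩ := exists_spanning_card_eq_sepMax g n hδ
  choose center hcenter hspan using hF
  let lift : X → X := fun x => Function.surjInv hsurj (center (π x))
  have hlift : ∀ x, ∃ a : ℕ → G, ∀ k < n,
      dist (f^[k] x) (a (k / m) • f^[k] (lift x)) < ε / 2 := fun x =>
    hshadow n x (lift x) fun k hk => by
      rw [hsemi.iterate_right k, hsemi.iterate_right k, Function.surjInv_eq hsurj]
      exact hspan (π x) k hk
  choose a ha using hlift
  have hcard : (Finset.univ ×ˢ F : Finset ((Fin (n / m + 1) → G) × Y)).card =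
      Nat.card G ^ (n / m + 1) * sepMax g n δ := by
    simp [Finset.card_product, hFcard]
  rw [← hcard]
  refine sepMax_le fun E hE => hE.card_le_of_code
    (code := fun x => (fun i : Fin (n / m + 1) => a x i, center (π x)))
    (fun x => by simp [hcenter]) fun x y hxy k hk => ?_
  obtain ⟨htranslations, hcenters⟩ := Prod.mk.inj hxy
  have htranslation : a x (k / m) = a y (k / m) :=
    congrFun htranslations ⟨k / m, Nat.lt_succ_of_le (Nat.div_le_div_right hk.le)⟩
  have hlifts : lift x = lift y := congrArg (Function.surjInv hsurj) hcenters
  have hx := ha x k hk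
  rw [htranslation, hlifts] at hx
  linarith [dist_triangle_right (f^[k] x) (f^[k] y) (a y (k / m) • f^[k] (lift y)), ha y k hk]

theorem tendsto_sepGrowthRate_of_finite_quotient (hf : Continuous f) (hπ : Continuous π)
    (hsurj : Function.Surjective π) (hsemi : Function.Semiconj π f g)
    (hfib : ∀ x y, π x = π y → ∃ a : G, x = a • y)
    (hcomm : ∀ a : G, Function.Commute f (a • ·)) {h : ℝ}
    (hlim : Tendsto (sepGrowthRate f) (𝓝[>] 0) (𝓝 h)) :
    Tendsto (sepGrowthRate g) (𝓝[>] 0) (𝓝 h) := by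
  have hf_le : ∀ ε > 0, sepGrowthRate f ε ≤ h := fun ε hε => ge_of_tendsto hlim <| by
    filter_upwards [Ioc_mem_nhdsGT hε] with δ hδ using sepGrowthRate_anti f hδ.1 hδ.2
  refine tendsto_order.2 ⟨fun b hb => ?_, fun b hb => ?_⟩
  · obtain ⟨ε, hεb, hε⟩ :=
      ((hlim.eventually_const_lt hb).and self_mem_nhdsWithin).exists
    have hloss : Tendsto (fun m : ℕ => b + Real.log (Nat.card G) / m) atTop (𝓝 b) := by
      simpa only [add_zero] using
        (tendsto_const_div_atTop_nhds_zero_nat (Real.log (Nat.card G))).const_add b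
    obtain ⟨m, hmb, hm⟩ :=
      ((hloss.eventually_lt_const hεb).and (eventually_gt_atTop 0)).exists
    obtain ⟨δ₀, hδ₀, hle⟩ := exists_sepMax_le_card_pow_mul hf hπ hsurj hsemi hfib hcomm hm hε
    filter_upwards [Ioc_mem_nhdsGT hδ₀] with δ hδ
    linarith [sepGrowthRate_le_add_log_div hδ₀ hle, sepGrowthRate_anti g hδ.1 hδ.2]
  · filter_upwards [self_mem_nhdsWithin] with δ hδ
    obtain ⟨ε, hε, hle⟩ := exists_sepMax_le_of_semiconj hπ hsurj hsemi hδ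
    exact ((sepGrowthRate_mono hε hle).trans (hf_le ε hε)).trans_lt hb

end FiniteQuotient

section LinearModels

theorem card_Icc_floor_neg_floor_le {M : ℝ} (hM : 0 ≤ M) :
    ((Finset.Icc ⌊-M⌋ ⌊M⌋).card : ℝ) ≤ 2 * M + 2 := by
  have hle : ⌊-M⌋ ≤ ⌊M⌋ + 1 := (Int.floor_mono (by linarith)).trans (lt_add_one _).le
  have hcast : ((Finset.Icc ⌊-M⌋ ⌊M⌋).card : ℝ) = ⌊M⌋ + 1 - ⌊-M⌋ := by
    exact_mod_cast Int.card_Icc_of_le _ _ hle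
  linarith [Int.floor_le M, Int.lt_floor_add_one (-M)]

theorem floor_mem_Icc_floor_neg_floor {x M : ℝ} (hx : |x| ≤ M) :
    ⌊x⌋ ∈ Finset.Icc ⌊-M⌋ ⌊M⌋ :=
  Finset.mem_Icc.2 ⟨Int.floor_mono (abs_le.1 hx).1, Int.floor_mono (abs_le.1 hx).2⟩

theorem abs_sub_lt_of_floor_div_eq {x y η : ℝ} (hη : 0 < η) (h : ⌊x / η⌋ = ⌊y / η⌋) :
    |x - y| < η := by
  simpa [← sub_div, abs_div, abs_of_pos hη, div_lt_one hη] using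
    Int.abs_sub_lt_one_of_floor_eq_floor h

theorem iterate_apply_of_semiconj_diagonal {X : Type*} {f : X → X} {P : ℝ × ℝ → X} {lam μ : ℝ}
    (hsemi : Function.Semiconj P (Prod.map (lam * ·) (μ * ·)) f) (k : ℕ) (v : ℝ × ℝ) :
    f^[k] (P v) = P (lam ^ k * v.1, μ ^ k * v.2) := by
  rw [← hsemi.iterate_right k, Prod.map_iterate, mul_left_iterate, mul_left_iterate,
    Prod.map_apply']

variable {X : Type*} [MetricSpace X] {f : X → X} {P : ℝ × ℝ → X} {lam μ : ℝ}

theorem dist_diagonal_pow_lt (hlam : 1 ≤ lam) (hμ : |μ| ≤ 1) {n k : ℕ} (hk : k ≤ n) {η : ℝ}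
    {v w : ℝ × ℝ} (hexp : |lam ^ n * v.1 - lam ^ n * w.1| < η) (hcontr : |v.2 - w.2| < η) :
    dist (lam ^ k * v.1, μ ^ k * v.2) (lam ^ k * w.1, μ ^ k * w.2) < η := by
  rw [Prod.dist_eq, Real.dist_eq, Real.dist_eq]
  refine max_lt (lt_of_le_of_lt ?_ hexp) (lt_of_le_of_lt ?_ hcontr) <;>
    simp only [← mul_sub, abs_mul, abs_pow]
  · rw [abs_of_nonneg (zero_le_one.trans hlam)]
    gcongr
  · exact mul_le_of_le_one_left (abs_nonneg _) (pow_le_one₀ (abs_nonneg μ) hμ)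

theorem exists_sepMax_le_mul_pow (hlam : 1 ≤ lam) (hμ : |μ| ≤ 1) (hP : UniformContinuous P)
    (hsemi : Function.Semiconj P (Prod.map (lam * ·) (μ * ·)) f) {R : ℝ}
    (hcover : ∀ x, ∃ v, ‖v‖ ≤ R ∧ P v = x) {δ : ℝ} (hδ : 0 < δ) :
    ∃ K : ℝ, ∀ n, (sepMax f n δ : ℝ) ≤ K * lam ^ n := by
  obtain ⟨η, hη, hclose⟩ := Metric.uniformContinuous_iff.1 hP δ hδ
  have hR : 0 ≤ R := by
    obtain ⟨v, hv, -⟩ := hcover (P 0)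
    exact (norm_nonneg v).trans hv
  choose lift hnorm hlift using hcover
  refine ⟨(2 * (R / η) + 2) ^ 2, fun n => ?_⟩
  have hpow : 1 ≤ lam ^ n := one_le_pow₀ hlam
  have hpos : 0 < lam ^ n := one_pos.trans_le hpow
  let cells (M : ℝ) : Finset ℤ := Finset.Icc ⌊-M⌋ ⌊M⌋
  have hcode : sepMax f n δ ≤ (cells (lam ^ n * R / η) ×ˢ cells (R / η)).card := by
    refine sepMax_le fun E hE => hE.card_le_of_code
      (code := fun x => (⌊lam ^ n * (lift x).1 / η⌋, ⌊(lift x).2 / η⌋))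
      (fun x => Finset.mem_product.2 ⟨?_, ?_⟩) fun x y hxy k hk => ?_
    · apply floor_mem_Icc_floor_neg_floor
      rw [abs_div, abs_mul, abs_of_pos hη, abs_of_pos hpos]
      gcongr
      exact (norm_fst_le (lift x)).trans (hnorm x)
    · apply floor_mem_Icc_floor_neg_floor
      rw [abs_div, abs_of_pos hη]
      gcongr
      exact (norm_snd_le (lift x)).trans (hnorm x)
    · obtain ⟨hexp, hcontr⟩ := Prod.mk.inj hxy
      rw [← hlift x, ← hlift y, iterate_apply_of_semiconj_diagonal hsemi,
        iterate_apply_of_semiconj_diagonal hsemi]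
      exact (hclose (dist_diagonal_pow_lt hlam hμ hk.le (abs_sub_lt_of_floor_div_eq hη hexp)
        (abs_sub_lt_of_floor_div_eq hη hcontr))).le
  calc (sepMax f n δ : ℝ)
      ≤ (cells (lam ^ n * R / η)).card * (cells (R / η)).card := by
        exact_mod_cast hcode.trans_eq (Finset.card_product _ _)
    _ ≤ (2 * (lam ^ n * R / η) + 2) * (2 * (R / η) + 2) := by
        gcongr <;> exact card_Icc_floor_neg_floor_le (by positivity)
    _ ≤ ((2 * (R / η) + 2) * lam ^ n) * (2 * (R / η) + 2) := by
        gcongr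
        rw [mul_div_assoc]
        linarith
    _ = (2 * (R / η) + 2) ^ 2 * lam ^ n := by ring

variable {γ : ℝ → X} {r c : ℝ}

theorem exists_le_lt_dist_iterate (hlam : 1 < lam) (hsemi : Function.Semiconj γ (lam * ·) f)
    (hc : 0 < c) (hexp : ∀ s t, |s - t| ≤ r → c * |s - t| ≤ dist (γ s) (γ t)) {n : ℕ} {s t : ℝ}
    (hne : s ≠ t) (hle : |s - t| ≤ r) (hge : r ≤ lam ^ n * |s - t|) :
    ∃ k ≤ n, c * r / lam < dist (f^[k] (γ s)) (f^[k] (γ t)) := by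
  have hpos : 0 < |s - t| := abs_pos.2 (sub_ne_zero.2 hne)
  have hlam₀ : 0 < lam := one_pos.trans hlam
  obtain ⟨k, hk, hk'⟩ := exists_nat_pow_near ((one_le_div hpos).2 hle) hlam
  have hkn : k ≤ n := (pow_le_pow_iff_right₀ hlam).1 (hk.trans ((div_le_iff₀ hpos).2 hge))
  have hscale : |lam ^ k * s - lam ^ k * t| = lam ^ k * |s - t| := by
    rw [← mul_sub, abs_mul, abs_of_pos (pow_pos hlam₀ k)]
  refine ⟨k, hkn, ?_⟩
  rw [← hsemi.iterate_right k, ← hsemi.iterate_right k, mul_left_iterate]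
  calc c * r / lam < c * (lam ^ k * |s - t|) := by
        rw [div_lt_iff₀ hlam₀, mul_assoc]
        gcongr
        rw [div_lt_iff₀ hpos, pow_succ] at hk'
        linarith
    _ = c * |lam ^ k * s - lam ^ k * t| := by rw [hscale]
    _ ≤ dist (γ (lam ^ k * s)) (γ (lam ^ k * t)) :=
        hexp _ _ (hscale.trans_le ((le_div_iff₀ hpos).1 hk))

theorem pow_le_sepMax_of_expanding_curve [CompactSpace X] (hlam : 1 < lam)
    (hsemi : Function.Semiconj γ (lam * ·) f) (hc : 0 < c) (hr : 0 < r)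
    (hexp : ∀ s t, |s - t| ≤ r → c * |s - t| ≤ dist (γ s) (γ t)) (n : ℕ) :
    lam ^ n ≤ sepMax f (n + 1) (c * r / lam) := by
  have hlam₀ : 0 < lam := one_pos.trans hlam
  have hpow : 0 < lam ^ n := pow_pos hlam₀ n
  have hspacing : ∀ i j : ℕ, |i * (r / lam ^ n) - j * (r / lam ^ n)| =
      |(i : ℝ) - j| * (r / lam ^ n) := fun i j => by
    rw [← sub_mul, abs_mul, abs_of_pos (div_pos hr hpow)]
  have hcard : (Finset.range (⌊lam ^ n⌋₊ + 1)).card ≤ sepMax f (n + 1) (c * r / lam) := by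
    refine card_le_sepMax_of_pairwise (x := fun j : ℕ => γ (j * (r / lam ^ n))) (by positivity)
      fun i hi j hj hne => ?_
    have hle : ∀ l ∈ Finset.range (⌊lam ^ n⌋₊ + 1), (l : ℝ) ≤ lam ^ n := fun l hl =>
      (Nat.le_floor_iff hpow.le).1 (Finset.mem_range_succ_iff.1 hl)
    have hdiff_le : |(i : ℝ) - j| ≤ lam ^ n :=
      abs_sub_le_of_nonneg_of_le i.cast_nonneg (hle i hi) j.cast_nonneg (hle j hj)
    have hdiff_ge : 1 ≤ |(i : ℝ) - j| := by
      exact_mod_cast Int.one_le_abs (sub_ne_zero.2 (Nat.cast_injective.ne hne) : (i : ℤ) - j ≠ 0)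
    have hpoints_ne : (i : ℝ) * (r / lam ^ n) ≠ j * (r / lam ^ n) := fun h =>
      hne (Nat.cast_injective (mul_right_cancel₀ (div_pos hr hpow).ne' h))
    obtain ⟨k, hk, hlt⟩ := exists_le_lt_dist_iterate (n := n) hlam hsemi hc hexp hpoints_ne
      (by rw [hspacing, mul_div_left_comm]
          exact mul_le_of_le_one_right hr.le ((div_le_one hpow).2 hdiff_le))
      (by rw [hspacing, mul_left_comm, mul_div_cancel₀ _ hpow.ne']
          exact le_mul_of_one_le_left hr.le hdiff_ge)
    exact ⟨k, Nat.lt_succ_of_le hk, hlt⟩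
  calc lam ^ n ≤ ((⌊lam ^ n⌋₊ + 1 : ℕ) : ℝ) := mod_cast (Nat.lt_floor_add_one (lam ^ n)).le
    _ ≤ sepMax f (n + 1) (c * r / lam) := by
        rw [← Finset.card_range (⌊lam ^ n⌋₊ + 1)]
        exact_mod_cast hcard

theorem tendsto_sepGrowthRate_of_semiconj_diagonal [CompactSpace X] (hlam : 1 < lam)
    (hμ : |μ| ≤ 1) (hP : UniformContinuous P)
    (hsemi : Function.Semiconj P (Prod.map (lam * ·) (μ * ·)) f) {R : ℝ}
    (hcover : ∀ x, ∃ v, ‖v‖ ≤ R ∧ P v = x) (hc : 0 < c) (hr : 0 < r)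
    (hexp : ∀ s t : ℝ, |s - t| ≤ r → c * |s - t| ≤ dist (P (s, 0)) (P (t, 0))) :
    Tendsto (sepGrowthRate f) (𝓝[>] 0) (𝓝 (Real.log lam)) := by
  have : Nonempty X := ⟨P 0⟩
  have hlam₀ : 0 < lam := one_pos.trans hlam
  have hε : 0 < c * r / lam := by positivity
  have hcurve : Function.Semiconj (fun t => P (t, 0)) (lam * ·) f := fun t => by
    simpa using hsemi (t, 0)
  refine tendsto_const_nhds.congr' ?_
  filter_upwards [Ioc_mem_nhdsGT hε] with δ hδ
  obtain ⟨K, hK⟩ := exists_sepMax_le_mul_pow hlam.le hμ hP hsemi hcover hδ.1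
  refine le_antisymm ?_ (sepGrowthRate_le_log hδ.1 hlam₀ hK)
  exact (log_le_sepGrowthRate hε hlam.le
    (pow_le_sepMax_of_expanding_curve hlam hcurve hc hr hexp)).trans
    (sepGrowthRate_anti f hδ.1 hδ.2)

end LinearModels

section TorusAutomorphisms

theorem norm_torusMk_le (v : ℝ × ℝ) : ‖torusMk v‖ ≤ ‖v‖ :=
  max_le_max QuotientAddGroup.norm_mk_le_norm QuotientAddGroup.norm_mk_le_norm

theorem norm_torusMk_eq {v : ℝ × ℝ} (hv : ‖v‖ ≤ 1 / 2) : ‖torusMk v‖ = ‖v‖ := by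
  have hcoe : ∀ a : ℝ, |a| ≤ 1 / 2 → ‖(a : AddCircle (1 : ℝ))‖ = |a| := fun a ha =>
    (AddCircle.norm_coe_eq_abs_iff 1 one_ne_zero).2 (by simpa using ha)
  exact congrArg₂ max (hcoe _ ((norm_fst_le v).trans hv)) (hcoe _ ((norm_snd_le v).trans hv))

theorem dist_torusMk (v w : ℝ × ℝ) : dist (torusMk v) (torusMk w) = ‖torusMk (v - w)‖ :=
  dist_eq_norm _ _

theorem uniformContinuous_torusMk : UniformContinuous torusMk :=
  (LipschitzWith.of_dist_le_mul (K := 1) fun v w => by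
    rw [NNReal.coe_one, one_mul, dist_torusMk, dist_eq_norm]
    exact norm_torusMk_le (v - w)).uniformContinuous

theorem exists_norm_le_one_torusMk_eq (x : Torus) : ∃ v, ‖v‖ ≤ 1 ∧ torusMk v = x := by
  obtain ⟨a, ha, hax⟩ := AddCircle.eq_coe_Ico x.1
  obtain ⟨b, hb, hbx⟩ := AddCircle.eq_coe_Ico x.2
  refine ⟨(a, b), max_le ?_ ?_, Prod.ext hax hbx⟩
  · exact abs_le.2 ⟨by linarith [ha.1], ha.2.le⟩
  · exact abs_le.2 ⟨by linarith [hb.1], hb.2.le⟩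

theorem exists_continuousLinearEquiv_semiconj_diagonal {a b c d lam μ : ℝ} (hb : b ≠ 0)
    (hne : lam ≠ μ) (htr : a + d = lam + μ) (hdet : a * d - b * c = lam * μ) :
    ∃ Q : (ℝ × ℝ) ≃L[ℝ] ℝ × ℝ, Function.Semiconj Q (Prod.map (lam * ·) (μ * ·))
      fun v => (a * v.1 + b * v.2, c * v.1 + d * v.2) := by
  -- The columns `(b, lam - a)` and `(b, μ - a)` are eigenvectors.
  let eigenbasis : ℝ × ℝ →ₗ[ℝ] ℝ × ℝ :=
    (LinearMap.toSpanSingleton ℝ (ℝ × ℝ) (b, lam - a)).coprod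
      (LinearMap.toSpanSingleton ℝ (ℝ × ℝ) (b, μ - a))
  have happly (v : ℝ × ℝ) :
      eigenbasis v = (b * (v.1 + v.2), (lam - a) * v.1 + (μ - a) * v.2) := by
    ext <;> simp [eigenbasis] <;> ring
  have hinj : Function.Injective eigenbasis := by
    refine (injective_iff_map_eq_zero eigenbasis).2 fun v hv => ?_
    rw [happly, Prod.mk_eq_zero] at hv
    have hsum : v.1 + v.2 = 0 := (mul_eq_zero.1 hv.1).resolve_left hb
    have hfst : v.1 = 0 := (mul_eq_zero.1 (by linear_combination hv.2 - (μ - a) * hsum :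
      (lam - μ) * v.1 = 0)).resolve_left (sub_ne_zero.2 hne)
    exact Prod.ext hfst (by simpa [hfst] using hsum)
  refine ⟨(LinearEquiv.ofInjectiveEndo eigenbasis hinj).toContinuousLinearEquiv, fun v => ?_⟩
  obtain rfl : d = lam + μ - a := by linarith
  change eigenbasis _ = (a * (eigenbasis v).1 + b * (eigenbasis v).2,
    c * (eigenbasis v).1 + (lam + μ - a) * (eigenbasis v).2)
  simp only [happly, Prod.map_fst, Prod.map_snd]
  ext
  · ring
  · linear_combination (v.1 + v.2) * hdet

theorem apply_zero_one_ne_zero_of_two_lt_abs_trace (A : Matrix.SpecialLinearGroup (Fin 2) ℤ)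
    (htr : 2 < |A.1.trace|) : A.1 0 1 ≠ 0 := by
  intro hzero
  have hdet := A.2
  rw [Matrix.det_fin_two, hzero, zero_mul, sub_zero] at hdet
  rw [Matrix.trace_fin_two] at htr
  rcases Int.mul_eq_one_iff_eq_one_or_neg_one.1 hdet with ⟨h₀, h₁⟩ | ⟨h₀, h₁⟩ <;>
    simp [h₀, h₁] at htr

theorem two_lt_add_inv_s9 {lam : ℝ} (hlam : 1 < lam) : 2 < lam + lam⁻¹ := by
  have hlam₀ : 0 < lam := one_pos.trans hlam
  have hsq : lam + lam⁻¹ - 2 = (lam - 1) ^ 2 / lam := by field_simp; ring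
  have : 0 < (lam - 1) ^ 2 / lam := div_pos (pow_pos (sub_pos.2 hlam) 2) hlam₀
  linarith

variable {A : Matrix.SpecialLinearGroup (Fin 2) ℤ} {f : Torus → Torus}

theorem exists_eigencoordinates {lam : ℝ} (hlam : 1 < lam)
    (htr : ((A.1 0 0 : ℤ) : ℝ) + ((A.1 1 1 : ℤ) : ℝ) = lam + lam⁻¹) :
    ∃ Q : (ℝ × ℝ) ≃L[ℝ] ℝ × ℝ,
      Function.Semiconj Q (Prod.map (lam * ·) (lam⁻¹ * ·)) (matAct A) := by
  have htrace : 2 < |A.1.trace| := by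
    have hgt := two_lt_add_inv_s9 hlam
    rw [← htr] at hgt
    rw [Matrix.trace_fin_two]
    exact lt_of_lt_of_le (mod_cast hgt) (le_abs_self _)
  have hdet := A.2
  rw [Matrix.det_fin_two] at hdet
  refine exists_continuousLinearEquiv_semiconj_diagonal
    (Int.cast_ne_zero.2 (apply_zero_one_ne_zero_of_two_lt_abs_trace A htrace))
    ((inv_lt_one_of_one_lt₀ hlam).trans hlam).ne' htr ?_
  rw [mul_inv_cancel₀ (one_pos.trans hlam).ne']
  exact_mod_cast hdet

theorem tendsto_sepGrowthRate_of_semiconj_matAct {lam : ℝ} (hlam : 1 < lam)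
    (htr : ((A.1 0 0 : ℤ) : ℝ) + ((A.1 1 1 : ℤ) : ℝ) = lam + lam⁻¹)
    (hf : Function.Semiconj torusMk (matAct A) f) :
    Tendsto (sepGrowthRate f) (𝓝[>] 0) (𝓝 (Real.log lam)) := by
  obtain ⟨Q, hQ⟩ := exists_eigencoordinates hlam htr
  have hinv : |lam⁻¹| ≤ 1 := by
    rw [abs_of_pos (inv_pos.2 (one_pos.trans hlam))]
    exact inv_le_one_of_one_le₀ hlam.le
  have hc : 0 < ‖Q (1, 0)‖ := by simp
  refine tendsto_sepGrowthRate_of_semiconj_diagonal (P := torusMk ∘ Q)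
    (R := ‖(Q.symm : ℝ × ℝ →L[ℝ] ℝ × ℝ)‖) (r := 1 / 2 / ‖Q (1, 0)‖) hlam hinv
    (uniformContinuous_torusMk.comp Q.lipschitz.uniformContinuous) (hQ.trans hf) (fun x => ?_) hc
    (by positivity) fun s t hst => ?_
  · obtain ⟨v, hv, rfl⟩ := exists_norm_le_one_torusMk_eq x
    exact ⟨Q.symm v, (Q.symm : ℝ × ℝ →L[ℝ] ℝ × ℝ).unit_le_opNorm v hv, by simp⟩
  · have hline : ‖Q (s, 0) - Q (t, 0)‖ = ‖Q (1, 0)‖ * |s - t| := by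
      have hsmul : ((s, 0) - (t, 0) : ℝ × ℝ) = (s - t) • (1, 0) := by ext <;> simp
      rw [← map_sub, hsmul, map_smul, norm_smul, Real.norm_eq_abs, mul_comm]
    rw [Function.comp_apply, Function.comp_apply, dist_torusMk, norm_torusMk_eq, hline]
    rw [hline, mul_comm]
    exact (le_div_iff₀ hc).1 hst

theorem map_neg_of_semiconj_matAct (hf : Function.Semiconj torusMk (matAct A) f) (x : Torus) :
    f (-x) = -f x := by
  obtain ⟨v, -, rfl⟩ := exists_norm_le_one_torusMk_eq x
  have hneg : matAct A (-v) = -matAct A v := by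
    ext <;> simp only [matAct, Prod.fst_neg, Prod.snd_neg] <;> ring
  calc f (-torusMk v) = torusMk (matAct A (-v)) := (hf (-v)).symm
    _ = -f (torusMk v) := by rw [hneg, ← hf]; rfl

theorem commute_units_smul_of_semiconj_matAct (hf : Function.Semiconj torusMk (matAct A) f)
    (a : ℤˣ) : Function.Commute f (a • ·) := fun x => by
  rcases Int.units_eq_one_or a with rfl | rfl
  · simp only [one_smul]
  · simpa only [Units.neg_smul, one_smul] using map_neg_of_semiconj_matAct hf x

end TorusAutomorphisms

/-- the topological entropy of `g_A` (in Bowen's sense, via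
separated sets) equals `log λ`. -/
theorem entropy_of_quotient
    (A : Matrix.SpecialLinearGroup (Fin 2) ℤ)
    (lam : ℝ) (hlam : 1 < lam)
    (htr : ((A.1 0 0 : ℤ) : ℝ) + ((A.1 1 1 : ℤ) : ℝ) = lam + lam⁻¹)
    (fA : Torus ≃ₜ Torus)
    (hfA : ∀ v : ℝ × ℝ, fA (torusMk v) = torusMk (matAct A v))
    (S2 : Type) [MetricSpace S2] [CompactSpace S2]
    (π : Torus → S2) (hπcont : Continuous π) (hπsurj : Function.Surjective π)
    (hπ : ∀ x y : Torus, π x = π y ↔ (x = y ∨ x = -y))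
    (gA : S2 ≃ₜ S2) (hgA : ∀ x : Torus, gA (π x) = π (fA x)) :
    Tendsto
      (fun δ : ℝ =>
        Filter.limsup (fun n : ℕ => Real.log (sepMax gA n δ) / n) atTop)
      (nhdsWithin 0 (Set.Ioi 0)) (nhds (Real.log lam)) := by
  have hsemi : Function.Semiconj torusMk (matAct A) fA := fun v => (hfA v).symm
  have hfib : ∀ x y, π x = π y → ∃ a : ℤˣ, x = a • y := fun x y hxy => by
    rcases (hπ x y).1 hxy with rfl | rfl
    · exact ⟨1, (one_smul _ _).symm⟩
    · exact ⟨-1, by rw [Units.neg_smul, one_smul]⟩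
  exact tendsto_sepGrowthRate_of_finite_quotient fA.continuous hπcont hπsurj
    (fun x => (hgA x).symm) hfib (commute_units_smul_of_semiconj_matAct hsemi)
    (tendsto_sepGrowthRate_of_semiconj_matAct hlam htr hsemi)
end

section
/- Let f : X → X be an expansive homeomorphism of a compact metric space such that 2α is an expansive constant of f. Let n, r ≥ 1, let (y_j)_{j=0}^{n} be points of X with y_n = y_0, and define the periodic concatenation (z_j)_{j=0}^{nr} by z_{jn+i} = y_i for 0 ≤ i ≤ n and 0 ≤ j ≤ r−1. If q ∈ X satisfies f^{nr}(q) = q and d(f^j(q), z_j) < α for every 0 ≤ j ≤ nr, then f^n(q) = q. -/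
/-- The `t`-th iterate of `f`, for `t : ℤ`. -/
noncomputable def zIter {X : Type*} [TopologicalSpace X] (f : X ≃ₜ X) (t : ℤ) : X → X :=
  ⇑(f.toEquiv ^ t)

/-!
Periodicity extends the `α`-closeness of the orbit of `q` to the concatenation from the `r` given
blocks to all times. As the concatenation has period `n`, the triangle inequality puts the orbits
of `f^[n] q` and `q` within `2 * α` of each other forever; negative times cost nothing since the
backward orbit of a periodic point is contained in its forward orbit.
-/

open Function

theorem exists_pow_smul_eq_zpow_smul {G X : Type*} [Group G] [MulAction G X] {g : G} {x : X}
    (hx : x ∈ periodicPts (g • ·)) (t : ℤ) : ∃ m : ℕ, g ^ m • x = g ^ t • x := by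
  have hpos : 0 < MulAction.period g x := minimalPeriod_pos_of_mem_periodicPts hx
  lift t % (MulAction.period g x : ℤ) to ℕ using Int.emod_nonneg t (by positivity) with m hm
  exact ⟨m, by rw [← zpow_natCast, hm, MulAction.zpow_mod_period_smul]⟩

theorem forall_iterate_mod_of_isPeriodicPt_mul {X : Type*} {f : X → X} {x : X} {n r : ℕ}
    (hx : IsPeriodicPt f (n * r) x) (hn : 0 < n) (hr : 0 < r) {P : ℕ → X → Prop}
    (hP : ∀ i < n, ∀ j < r, P i (f^[j * n + i] x)) (m : ℕ) : P (m % n) (f^[m] x) := by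
  have hblock : m / n % r * n + m % n = m % (n * r) := by rw [Nat.mod_mul]; ring
  have hm := hP (m % n) (Nat.mod_lt m hn) (m / n % r) (Nat.mod_lt _ hr)
  rwa [hblock, hx.iterate_mod_apply] at hm

theorem dist_add_le_two_mul_of_dist_mod_le {X : Type*} [PseudoMetricSpace X] {x y : ℕ → X} {n : ℕ}
    {α : ℝ} (h : ∀ m, dist (x m) (y (m % n)) ≤ α) (m : ℕ) :
    dist (x (m + n)) (x m) ≤ 2 * α := by
  have hshift : dist (x (m + n)) (y (m % n)) ≤ α := by
    simpa only [Nat.add_mod_right] using h (m + n)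
  calc dist (x (m + n)) (x m)
      ≤ dist (x (m + n)) (y (m % n)) + dist (x m) (y (m % n)) := dist_triangle_right _ _ _
    _ ≤ α + α := add_le_add hshift (h m)
    _ = 2 * α := (two_mul α).symm

theorem period_matches_pseudo_orbit_length_general {X : Type*} [PseudoMetricSpace X]
    (f : Equiv.Perm X) (α : ℝ)
    (hexp : ∀ x y : X, (∀ t : ℤ, dist ((f ^ t) x) ((f ^ t) y) ≤ 2 * α) → x = y)
    (n r : ℕ) (hr : 1 ≤ r) (y : ℕ → X) (q : X) (hq : f^[n * r] q = q)
    (hshadow : ∀ i < n, ∀ j < r, dist (f^[j * n + i] q) (y i) ≤ α) :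
    f^[n] q = q := by
  obtain rfl | hn := n.eq_zero_or_pos
  · rfl
  have hclose : ∀ m, dist (f^[m] q) (y (m % n)) ≤ α :=
    forall_iterate_mod_of_isPeriodicPt_mul (P := fun i x ↦ dist x (y i) ≤ α) hq hn hr hshadow
  refine hexp _ _ fun t ↦ ?_
  obtain ⟨m, hm⟩ : ∃ m : ℕ, f^[m] q = (f ^ t) q :=
    exists_pow_smul_eq_zpow_smul (g := f) (mk_mem_periodicPts (Nat.mul_pos hn hr) hq) t
  have hshift : (f ^ t) (f^[n] q) = f^[m + n] q := by
    rw [add_comm, iterate_add_apply, hm]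
    exact DFunLike.congr_fun ((Commute.refl f).zpow_left t |>.pow_right n) q
  rw [hshift, ← hm]
  exact dist_add_le_two_mul_of_dist_mod_le hclose m

/-- for an expansive homeomorphism with expansive constant `2α`,
a periodic point of period `n·r` that `α`-shadows the `r`-fold periodic
concatenation of a closed pseudo-orbit of length `n` has period `n`. -/
theorem period_matches_pseudo_orbit_length
    {X : Type*} [MetricSpace X] [CompactSpace X] (f : X ≃ₜ X)
    (α : ℝ) (hα : 0 < α)
    (hexp : ∀ x y : X, (∀ t : ℤ, dist (zIter f t x) (zIter f t y) ≤ 2 * α) → x = y)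
    (n r : ℕ) (hn : 1 ≤ n) (hr : 1 ≤ r)
    (y : ℕ → X) (hy : y n = y 0)
    (q : X) (hq : f^[n*r] q = q)
    -- the periodic concatenation (z_j)_{j=0}^{nr}, z_{jn+i} = y_i, is α-shadowed by q
    (hshadow : ∀ i ≤ n, ∀ j < r, dist (f^[j*n+i] q) (y i) < α) :
    f^[n] q = q :=
  period_matches_pseudo_orbit_length_general f.toEquiv α hexp n r hr y q hq
    fun i hi j hj ↦ (hshadow i hi.le j hj).le
end
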